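/- arXiv:1006.3105 — 2 statements merged into one kernel-verified Lean document; each statement's English description precedes it below -/
import Mathlib

section
/- Let f(z) be a continuous function on an open connected set Ω ⊆ ℂ containing 0, let φ : [0, b] → ℝ be continuous with φ(0) = 0, and let Γ = {t + iφ(t) : 0 ≤ t < b}. Let E ⊆ ℂ be a connected open set. Assume: (i) f has a Taylor series at 0; (ii) φ has a Taylor series at 0; (iii) there is no λ > 0 such that φ is real analytic on [0, λ); (iv) for each nonzero s ∈ E there is a holomorphic function F_s on an open set containing s⁻¹Ω ∩ Γ with f(sz) = F_s(z) for all z ∈ s⁻¹Ω ∩ Γ. Then f is holomorphic on the open set Λ = ⋃_{s ∈ E} Γ_s, where Γ_s is the connected component of sΓ ∩ Ω containing the origin. -/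
/-!
Write `γ t = t + i φ(t)`, and let `a j k` be the Taylor coefficients of `f` at `0`. The heart of the
matter is that `a j k = 0` for every `k ≠ 0`.

Each monomial `γ ^ j * conj γ ^ k` has an asymptotic expansion in powers of `γ`, because
`conj γ = 2 t - γ` and the series of `γ` can be formally inverted (`exists_expansion`). Therefore the
`n`-th Taylor coefficient `c n s` of the holomorphic function `F_s` of hypothesis `hext` is a
polynomial of degree at most `n` in `s` and `conj s` (`germ_coeffs`). The bound
`‖c n s‖ ≤ M ^ (n + 1)` holds for each `s` with its own `M`; by Baire's theorem it holds uniformly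
on some ball (`exists_uniform_bound`), and a Bernstein-type inequality turns it into geometric
bounds on the coefficients of these polynomials (`bi_coeff_bound`). So for each `(j, k)` the formal
expansion of `a j k * γ ^ j * conj γ ^ k` in powers of `γ` converges to a holomorphic germ `G`.

To see that `G (γ t)` is really `a j k * γ ^ j * conj γ ^ k`, use that the point `s * γ t₁` is also
`s' * γ t₂` with `s' = s * γ t₁ / γ t₂`. The two resulting expansions of `f` there have the same
sum for all `s` in a ball, and comparing coefficients of `s ^ j * conj s ^ k` shows that
`G (γ t) / (γ ^ j * conj γ ^ k)` is locally constant (`coeff_transport`); its limit at `0` is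
`a j k` (`monomial_germ`).

If `a j k ≠ 0` with `k ≠ 0`, it follows that `conj γ`, hence `t = (γ + conj γ) / 2`, is a holomorphic
function of `γ` near `0`; inverting it makes `φ` real analytic on some `[0, l)`, which is excluded
(`exists_analytic_param`, `analyticOn_of_param`).

Once only the coefficients `a n 0` remain, all the germs `F_s(w / s)` at `w = 0` coincide. At a point
`p = s * γ t₁` of the union, the nearby points are `s' * γ t₁` with `s'` close to `s`, and analytic
continuation along the arc identifies `f` near `p` with `F_s(· / s)` (`differentiableAt_of_pure`).
At `p = 0` the derivative comes from the Taylor expansion of order one.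
-/

open Complex Filter Asymptotics Set

/-- `f` has the formal power series `∑ a j k · z^j z̄^k` as Taylor series at `0`. -/
def HasTaylorSeries2At (f : ℂ → ℂ) (a : ℕ → ℕ → ℂ) : Prop :=
  ∀ n : ℕ,
    (fun z : ℂ => f z -
      ∑ p ∈ (Finset.range (n + 1) ×ˢ Finset.range (n + 1)).filter
          (fun p => p.1 + p.2 ≤ n),
        a p.1 p.2 * z ^ p.1 * (starRingEnd ℂ z) ^ p.2)
      =o[nhds (0 : ℂ)] fun z => ‖z‖ ^ n

/-- `φ : [0,b] → ℝ` has the formal power series `∑ h j · t^j` as Taylor series at `0`. -/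
def HasTaylorSeries1At (φ : ℝ → ℝ) (h : ℕ → ℂ) : Prop :=
  ∀ n : ℕ,
    (fun t : ℝ => (↑(φ t) : ℂ) - ∑ j ∈ Finset.range (n + 1), h j * (↑t : ℂ) ^ j)
      =o[nhdsWithin (0 : ℝ) (Set.Ici 0)] fun t => |t| ^ n

/-! ### Polynomial inequalities -/

open Polynomial in
/-- Bernstein-type growth estimate: a polynomial of degree `≤ d` bounded by `B` on `[-δ, δ]` is at
most `B * K ^ d` on a disc, with `K` depending only on `δ` and the radius. The function
`z ^ d * q (δ / 2 * (z + z⁻¹))` is a polynomial in `z`, bounded by `B` on the unit circle, and the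
maximum principle carries the bound into the disc; the Joukowski map `z ↦ δ / 2 * (z + z⁻¹)`
sends the punctured closed unit disc onto `ℂ`. -/
lemma poly_growth (q : Polynomial ℂ) (d : ℕ) (hd : q.natDegree ≤ d) (δ R B : ℝ) (hδ : 0 < δ)
    (h : ∀ x : ℝ, |x| ≤ δ → ‖q.eval (x : ℂ)‖ ≤ B) (w : ℂ) (hw : ‖w‖ ≤ R) :
    ‖q.eval w‖ ≤ B * (2 * R / δ + 1) ^ d := by
  set P : ℂ → ℂ := fun z => ∑ m ∈ Finset.range (d + 1),
    q.coeff m * (δ / 2 : ℂ) ^ m * (z ^ 2 + 1) ^ m * z ^ (d - m) with hP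
  have hPz : ∀ z : ℂ, z ≠ 0 → P z = z ^ d * q.eval ((δ / 2 : ℂ) * (z + z⁻¹)) := by
    intro z hz
    rw [eval_eq_sum_range' (Nat.lt_succ_of_le hd), hP, Finset.mul_sum]
    refine Finset.sum_congr rfl fun m hm => ?_
    have hmd : m ≤ d := Nat.lt_succ_iff.1 (Finset.mem_range.1 hm)
    have : z ^ d = z ^ (d - m) * z ^ m := by rw [← pow_add, Nat.sub_add_cancel hmd]
    have h2 : z ^ 2 + 1 = z * (z + z⁻¹) := by field_simp
    rw [this, h2, mul_pow, mul_pow]; ring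
  have hB : 0 ≤ B := (norm_nonneg _).trans (h 0 (by simpa using hδ.le))
  -- `P` is a polynomial, so there is no singularity at `0` and the maximum principle applies
  have hmax : ∀ z : ℂ, ‖z‖ ≤ 1 → ‖P z‖ ≤ B := by
    intro z hz
    refine Complex.norm_le_of_forall_mem_frontier_norm_le (U := Metric.ball 0 1) Metric.isBounded_ball
      ?_ ?_ (z := z) ?_
    · apply Differentiable.diffContOnCl
      rw [hP]; fun_prop
    · intro z hz
      rw [frontier_ball _ one_ne_zero, mem_sphere_zero_iff_norm] at hz
      have hz0 : z ≠ 0 := by rintro rfl; simp at hz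
      have hinv : z + z⁻¹ = ((2 * z.re : ℝ) : ℂ) := by
        rw [Complex.inv_def, Complex.normSq_eq_norm_sq, hz]
        simp [Complex.add_conj]
      rw [hPz z hz0, norm_mul, norm_pow, hz, one_pow, one_mul, hinv]
      have := h (δ * z.re) (by
        rw [abs_mul, abs_of_pos hδ]
        have := (abs_re_le_norm z).trans_eq hz
        nlinarith)
      have e : (δ / 2 : ℂ) * ((2 * z.re : ℝ) : ℂ) = ((δ * z.re : ℝ) : ℂ) := by
        push_cast; ring
      rwa [e]
    · rw [closure_ball _ one_ne_zero]; simpa using hz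
  -- of the two Joukowski preimages of `w`, mutually inverse, one lies in the closed unit disc
  obtain ⟨z, hz0, hz1, hzw⟩ : ∃ z : ℂ, z ≠ 0 ∧ ‖z‖ ≤ 1 ∧ (δ / 2 : ℂ) * (z + z⁻¹) = w := by
    have hδ' : (δ : ℂ) ≠ 0 := by exact_mod_cast hδ.ne'
    obtain ⟨r, hr⟩ := IsAlgClosed.exists_pow_nat_eq ((w / δ) ^ 2 - 1) (n := 2) (by norm_num)
    have h1 : (w / δ + r) * (w / δ - r) = 1 := by linear_combination -hr
    have key : ∀ u v : ℂ, u * v = 1 → u + v = 2 * (w / δ) → ‖u‖ ≤ 1 →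
        ∃ z : ℂ, z ≠ 0 ∧ ‖z‖ ≤ 1 ∧ (δ / 2 : ℂ) * (z + z⁻¹) = w := by
      intro u v huv hs hu
      refine ⟨u, left_ne_zero_of_mul_eq_one huv, hu, ?_⟩
      rw [← eq_inv_of_mul_eq_one_right huv, hs]; field_simp
    rcases le_total ‖w / δ + r‖ 1 with hle | hle
    · exact key _ _ h1 (by ring) hle
    · refine key _ _ (by rw [mul_comm]; exact h1) (by ring) ?_
      have := congrArg norm h1
      rw [norm_mul, norm_one] at this
      nlinarith [norm_nonneg (w / δ - r)]
  have h1 := hmax z hz1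
  rw [hPz z hz0, hzw, norm_mul, norm_pow] at h1
  have hzi : ‖z⁻¹‖ ≤ 2 * R / δ + 1 := by
    have : z⁻¹ = 2 * w / δ - z := by
      have hδ' : (δ : ℂ) ≠ 0 := by exact_mod_cast hδ.ne'
      rw [← hzw]; field_simp; ring
    rw [this]
    refine (norm_sub_le _ _).trans (add_le_add ?_ hz1)
    rw [norm_div, norm_mul, Complex.norm_real, Real.norm_of_nonneg hδ.le]
    simp only [Complex.norm_ofNat]; gcongr
  have hzp : 0 < ‖z‖ := norm_pos_iff.2 hz0
  calc ‖q.eval w‖ = (‖z‖ ^ d * ‖q.eval w‖) * ‖z⁻¹‖ ^ d := by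
        rw [norm_inv, inv_pow]; field_simp
    _ ≤ B * (2 * R / δ + 1) ^ d := by gcongr

/-- Cauchy's estimate on the unit circle. -/
lemma coeff_bound (q : Polynomial ℂ) (B : ℝ) (h : ∀ z : ℂ, ‖z‖ ≤ 1 → ‖q.eval z‖ ≤ B) (m : ℕ) :
    ‖q.coeff m‖ ≤ B := by
  have h1 := Complex.norm_iteratedDeriv_le_of_forall_mem_sphere_norm_le m (f := fun z => q.eval z)
    (c := 0) (R := 1) (C := B) one_pos q.differentiable.diffContOnCl
    (fun z hz => h z (by simpa using (mem_sphere_zero_iff_norm.1 hz).le))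
  have h2 : iteratedDeriv m (fun z => q.eval z) 0 = m.factorial * q.coeff m := by
    have : ∀ r : Polynomial ℂ, iteratedDeriv m (fun z => r.eval z) =
        fun z => (Polynomial.derivative^[m] r).eval z := by
      clear h1
      induction m with
      | zero => intro r; simp
      | succ m ih =>
        intro r
        have e : deriv (fun z => r.eval z) = fun z => (Polynomial.derivative r).eval z := by
          ext z; exact r.deriv
        rw [iteratedDeriv_succ', e, ih (Polynomial.derivative r), Function.iterate_succ_apply]
    rw [this]
    simp only [← Polynomial.coeff_zero_eq_eval_zero, Polynomial.coeff_iterate_derivative]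
    simp [Nat.descFactorial_self]
  rw [h2] at h1
  have h3 : (0:ℝ) < m.factorial := by positivity
  simp only [norm_mul, one_pow, div_one, Complex.norm_natCast] at h1
  exact le_of_mul_le_mul_left h1 h3

/-- The pairs `(j, k)` with `j + k ≤ n`: the monomials `z ^ j * conj z ^ k` of degree at most `n`.
It unfolds to the index set written out in `HasTaylorSeries2At`. -/
abbrev tri (n : ℕ) : Finset (ℕ × ℕ) :=
  (Finset.range (n + 1) ×ˢ Finset.range (n + 1)).filter (fun p => p.1 + p.2 ≤ n)

lemma mem_tri {n : ℕ} {p : ℕ × ℕ} : p ∈ tri n ↔ p.1 + p.2 ≤ n := by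
  simp only [tri, Finset.mem_filter, Finset.mem_product, Finset.mem_range]
  omega

open Polynomial in
/-- A polynomial in `s` and `conj s` of degree `≤ n` that is bounded by `B` on a ball has all its
coefficients bounded by `B * C ^ n`, with `C` depending only on the ball. Writing `s = s₀ + x + i y`,
the polynomial extends to complex `x` and `y`; `poly_growth` bounds the extension in each variable
in turn, and Cauchy's estimates in the independent variables `s` and `conj s` give the result. -/
lemma bi_coeff_bound (s₀ : ℂ) (ρ : ℝ) (hρ : 0 < ρ) : ∃ C : ℝ, 1 ≤ C ∧
    ∀ (n : ℕ) (β : ℕ → ℕ → ℂ) (B : ℝ),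
      (∀ s ∈ Metric.ball s₀ ρ,
        ‖∑ p ∈ tri n, β p.1 p.2 * s ^ p.1 * (starRingEnd ℂ s) ^ p.2‖ ≤ B) →
      ∀ j k, j + k ≤ n → ‖β j k‖ ≤ B * C ^ n := by
  set R : ℝ := 1 + ‖s₀‖ with hR
  set δ : ℝ := ρ / 3 with hδ
  have hδ0 : 0 < δ := by positivity
  set K : ℝ := 2 * R / δ + 1 with hK
  have hK1 : 1 ≤ K := by
    have : 0 ≤ 2 * R / δ := by positivity
    linarith
  refine ⟨K * K, by nlinarith, ?_⟩
  intro n β B hB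
  set W : ℂ → ℂ → ℂ := fun x y => ∑ p ∈ tri n, β p.1 p.2 * (x + (s₀ + I * y)) ^ p.1 *
    (x + (starRingEnd ℂ s₀ - I * y)) ^ p.2 with hW
  -- `W x y` is the polynomial at `s = s₀ + x + I * y` when `x` and `y` are real
  have h0 : ∀ x y : ℝ, |x| ≤ δ → |y| ≤ δ → ‖W x y‖ ≤ B := by
    intro x y hx hy
    have := hB (x + (s₀ + I * y)) (by
      rw [mem_ball_iff_norm]
      have e : (x : ℂ) + (s₀ + I * y) - s₀ = x + I * y := by ring
      rw [e]
      refine (norm_add_le _ _).trans_lt ?_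
      rw [norm_mul, norm_I, one_mul, norm_real, norm_real, Real.norm_eq_abs, Real.norm_eq_abs]
      linarith)
    convert this using 6
    simp only [map_add, map_mul, conj_ofReal, conj_I]
    ring
  have h1 : ∀ (x : ℂ) (y : ℝ), ‖x‖ ≤ R → |y| ≤ δ → ‖W x y‖ ≤ B * K ^ n := by
    intro x y hx hy
    set q : ℂ[X] := ∑ p ∈ tri n, C (β p.1 p.2) * (X + C (s₀ + I * y)) ^ p.1 *
      (X + C (starRingEnd ℂ s₀ - I * y)) ^ p.2 with hq
    have hqe : ∀ x, q.eval x = W x y := by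
      intro x; simp [hq, hW, eval_finsetSum]
    rw [← hqe]
    refine poly_growth q n ?_ δ R B hδ0 (fun x hx => ?_) x hx
    · refine natDegree_sum_le_of_forall_le _ _ fun p hp => ?_
      have h1 := mem_tri.1 hp
      refine le_trans ?_ h1
      compute_degree
    · rw [hqe]; exact h0 x y hx hy
  have h2 : ∀ x y : ℂ, ‖x‖ ≤ R → ‖y‖ ≤ R → ‖W x y‖ ≤ B * (K * K) ^ n := by
    intro x y hx hy
    set q : ℂ[X] := ∑ p ∈ tri n, C (β p.1 p.2) * (C I * X + C (x + s₀)) ^ p.1 *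
      (C (-I) * X + C (x + starRingEnd ℂ s₀)) ^ p.2 with hq
    have hqe : ∀ y, q.eval y = W x y := by
      intro y
      simp only [hq, hW, eval_finsetSum, eval_mul, eval_pow, eval_add, eval_C, eval_X]
      refine Finset.sum_congr rfl fun p _ => ?_
      ring_nf
    rw [← hqe, mul_pow, ← mul_assoc]
    refine poly_growth q n ?_ δ R _ hδ0 (fun y hy => ?_) y hy
    · refine natDegree_sum_le_of_forall_le _ _ fun p hp => ?_
      have h1 := mem_tri.1 hp
      refine le_trans ?_ h1
      compute_degree
    · rw [hqe]; exact h1 x y hx hy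
  have h3 : ∀ u w : ℂ, ‖u‖ ≤ 1 → ‖w‖ ≤ 1 →
      ‖∑ p ∈ tri n, β p.1 p.2 * u ^ p.1 * w ^ p.2‖ ≤ B * (K * K) ^ n := by
    intro u w hu hw
    have hc : ‖starRingEnd ℂ s₀‖ = ‖s₀‖ := by simp
    have a1 : ‖u - s₀‖ ≤ R := (norm_sub_le _ _).trans (by linarith)
    have a2 : ‖w - starRingEnd ℂ s₀‖ ≤ R := (norm_sub_le _ _).trans (by linarith)
    have := h2 (((u - s₀) + (w - starRingEnd ℂ s₀)) / 2)
      (((u - s₀) - (w - starRingEnd ℂ s₀)) / 2 * (-I))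
      (by
        rw [norm_div, Complex.norm_ofNat]
        linarith [norm_add_le (u - s₀) (w - starRingEnd ℂ s₀)])
      (by
        rw [norm_mul, norm_neg, norm_I, mul_one, norm_div, Complex.norm_ofNat]
        linarith [norm_sub_le (u - s₀) (w - starRingEnd ℂ s₀)])
    convert this using 6
    · linear_combination ((u - s₀ - (w - starRingEnd ℂ s₀)) / 2) * I_sq
    · linear_combination (-(u - s₀ - (w - starRingEnd ℂ s₀)) / 2) * I_sq
  intro j k hjk
  have h4 : ∀ w : ℂ, ‖w‖ ≤ 1 →
      ‖∑ p ∈ tri n, (if p.1 = j then β p.1 p.2 else 0) * w ^ p.2‖ ≤ B * (K * K) ^ n := by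
    intro w hw
    have := coeff_bound (∑ p ∈ tri n, C (β p.1 p.2 * w ^ p.2) * X ^ p.1) (B * (K * K) ^ n)
      (by
        intro u hu
        convert h3 u w hu hw using 2
        rw [eval_finsetSum]
        refine Finset.sum_congr rfl fun p _ => ?_
        simp only [eval_mul, eval_C, eval_pow, eval_X]; ring) j
    convert this using 2
    rw [finsetSum_coeff]
    refine Finset.sum_congr rfl fun p _ => ?_
    rw [coeff_C_mul_X_pow]
    by_cases h : p.1 = j
    · simp [h]
    · simp [h, Ne.symm h]
  have := coeff_bound (∑ p ∈ tri n, C (if p.1 = j then β p.1 p.2 else 0) * X ^ p.2)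
    (B * (K * K) ^ n) (by
      intro w hw
      convert h4 w hw using 2
      rw [eval_finsetSum]
      refine Finset.sum_congr rfl fun p _ => ?_
      simp only [eval_mul, eval_C, eval_pow, eval_X]) k
  rw [finsetSum_coeff, Finset.sum_eq_single (j, k)] at this
  · simpa using this
  · rintro ⟨a, b⟩ _ hne
    rw [coeff_C_mul_X_pow]
    by_cases h : a = j
    · have : k ≠ b := by rintro rfl; exact hne (by rw [h])
      simp [this]
    · simp [h]
  · intro h; exact absurd (mem_tri.2 hjk) h

/-! ### Asymptotic expansions along the curve -/

lemma isBigO_id_curve {γ : ℝ → ℂ} (hre : ∀ t, (γ t).re = t) :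
    (fun t : ℝ => t) =O[nhdsWithin 0 (Ioi 0)] γ := by
  refine IsBigO.of_bound 1 (Eventually.of_forall fun t => ?_)
  rw [one_mul, Real.norm_eq_abs]
  simpa [hre] using abs_re_le_norm (γ t)

lemma tendsto_curve {γ : ℝ → ℂ} (hO : γ =O[nhdsWithin 0 (Ioi 0)] (fun t : ℝ => t)) :
    Tendsto γ (nhdsWithin 0 (Ioi 0)) (nhds 0) :=
  hO.trans_tendsto (tendsto_id.mono_left nhdsWithin_le_nhds)

lemma isLittleO_pow_right {m n : ℕ} (h : m < n) :
    (fun t : ℝ => t ^ n) =o[nhdsWithin 0 (Ioi 0)] (fun t : ℝ => t ^ m) :=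
  (isLittleO_pow_pow h).mono nhdsWithin_le_nhds

lemma isBigO_pow_right {m n : ℕ} (h : m ≤ n) :
    (fun t : ℝ => t ^ n) =O[nhdsWithin 0 (Ioi 0)] (fun t : ℝ => t ^ m) := by
  rcases h.eq_or_lt with rfl | h
  · exact isBigO_refl _ _
  · exact (isLittleO_pow_right h).isBigO

lemma eval_curve_isBigO {γ : ℝ → ℂ} (hO : γ =O[nhdsWithin 0 (Ioi 0)] (fun t : ℝ => t))
    (q : Polynomial ℂ) :
    (fun t => q.eval (γ t)) =O[nhdsWithin 0 (Ioi 0)] (fun _ => (1 : ℝ)) :=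
  ((q.continuous.tendsto 0).comp (tendsto_curve hO)).isBigO_one ℝ

/-- Asymptotic expansions in powers of `γ` are unique: a polynomial in `γ` that is `o(t ^ N)` has
no coefficient of degree `≤ N`. -/
lemma expansion_unique {γ : ℝ → ℂ} (hre : ∀ t, (γ t).re = t)
    (hO : γ =O[nhdsWithin 0 (Ioi 0)] (fun t : ℝ => t)) (q : Polynomial ℂ) (N : ℕ)
    (h : (fun t => q.eval (γ t)) =o[nhdsWithin 0 (Ioi 0)] (fun t : ℝ => t ^ N)) :
    ∀ n ≤ N, q.coeff n = 0 := by
  intro n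
  induction n using Nat.strong_induction_on with
  | _ n ih =>
  intro hn
  obtain ⟨r, rfl⟩ : Polynomial.X ^ n ∣ q :=
    Polynomial.X_pow_dvd_iff.2 fun d hd => ih d hd (hd.le.trans hn)
  have h1 : (fun t => γ t ^ n * r.eval (γ t)) =o[nhdsWithin 0 (Ioi 0)] (fun t => γ t ^ n) := by
    have := (h.trans_isBigO (isBigO_pow_right hn)).trans_isBigO ((isBigO_id_curve hre).pow n)
    simpa using this
  have h2 := h1.tendsto_div_nhds_zero
  have h3 : Tendsto (fun t => r.eval (γ t)) (nhdsWithin 0 (Ioi 0)) (nhds 0) := by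
    refine h2.congr' ?_
    filter_upwards [self_mem_nhdsWithin] with t ht
    have : γ t ≠ 0 := by
      intro h0
      have := hre t
      rw [h0] at this
      exact (ne_of_gt ht) this.symm
    field_simp
  have h4 := tendsto_nhds_unique h3 ((r.continuous.tendsto 0).comp (tendsto_curve hO))
  have h5 : (Polynomial.X ^ n * r).coeff n = r.coeff 0 := by
    simpa using Polynomial.coeff_X_pow_mul r n 0
  rw [h5, Polynomial.coeff_zero_eq_eval_zero, ← h4]

lemma pow_sub_pow_isBigO {l : Filter ℝ} {u v : ℝ → ℂ} {g : ℝ → ℝ}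
    (hu : u =O[l] (fun _ => (1 : ℝ))) (hv : v =O[l] (fun _ => (1 : ℝ)))
    (huv : (fun t => u t - v t) =O[l] g) (k : ℕ) :
    (fun t => u t ^ k - v t ^ k) =O[l] g := by
  induction k with
  | zero => simpa using isBigO_zero g l
  | succ k ih =>
    have h1 := hu.mul ih
    have h2 := huv.mul (hv.pow k)
    simp only [one_mul, one_pow, mul_one] at h1 h2
    exact (h1.add h2).congr_left fun t => by ring

/-- The parameter `t` has an asymptotic expansion in powers of `γ(t) = t + i φ(t)`: this is the
formal inversion of the Taylor series of `γ`. -/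
lemma exists_param_expansion {φ : ℝ → ℝ} {h : ℕ → ℂ} (hT : HasTaylorSeries1At φ h)
    (h0 : h 0 = 0) (h1 : 1 + I * h 1 ≠ 0) {γ : ℝ → ℂ} (hγ : ∀ t, γ t = t + I * φ t) (N : ℕ) :
    ∃ p : Polynomial ℂ, (fun t : ℝ => (t : ℂ) - p.eval (γ t))
      =O[nhdsWithin 0 (Ioi 0)] (fun t : ℝ => t ^ (N + 1)) := by
  have hid : (fun t : ℝ => (t : ℂ)) =O[nhdsWithin 0 (Ioi 0)] (fun t : ℝ => t) :=
    IsBigO.of_bound 1 (Eventually.of_forall fun t => by simp)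
  induction N with
  | zero => exact ⟨0, by simpa using hid⟩
  | succ N ih =>
    obtain ⟨p, hp⟩ := ih
    have hpO : (fun t => p.eval (γ t)) =O[nhdsWithin 0 (Ioi 0)] (fun t : ℝ => t) := by
      have := hid.sub (hp.trans (by simpa using isBigO_pow_right (Nat.le_add_left 1 N)))
      simpa using this
    have hpow : ∀ i : ℕ, (fun t : ℝ => (t : ℂ) ^ (i + 1) - p.eval (γ t) ^ (i + 1))
        =O[nhdsWithin 0 (Ioi 0)] (fun t : ℝ => t ^ (N + 1 + i)) := by
      intro i
      induction i with
      | zero => simpa using hp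
      | succ i ih =>
        have e1 : (fun t : ℝ => t * t ^ (N + 1 + i)) = fun t => t ^ (N + 1 + (i + 1)) := by
          ext t; ring
        have e2 : (fun t : ℝ => t ^ (N + 1) * t ^ (i + 1)) = fun t => t ^ (N + 1 + (i + 1)) := by
          ext t; ring
        have e3 := ((hid.mul ih).trans (by rw [e1]; exact isBigO_refl _ _)).add
          ((hp.mul (hpO.pow (i + 1))).trans (by rw [e2]; exact isBigO_refl _ _))
        exact e3.congr_left fun t => by ring
    have hφ : (fun t : ℝ => (φ t : ℂ) - ∑ j ∈ Finset.range (N + 2 + 1), h j * (t : ℂ) ^ j)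
        =O[nhdsWithin 0 (Ioi 0)] (fun t : ℝ => t ^ (N + 2)) := by
      have := ((hT (N + 2)).mono (nhdsWithin_mono 0 Ioi_subset_Ici_self)).isBigO
      refine this.trans (IsBigO.of_bound 1 (Eventually.of_forall fun t => by simp))
    -- solve `γ = (1 + I * h 1) * t + I * ∑ h i * t ^ i` for the linear term, with `t` replaced by
    -- `p (γ t)` in the terms of order `i ≥ 2`: this gains one order
    refine ⟨Polynomial.C (1 + I * h 1)⁻¹ * (Polynomial.X - Polynomial.C I *
      ∑ i ∈ Finset.range (N + 1), Polynomial.C (h (i + 2)) * p ^ (i + 2)), ?_⟩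
    have hs : (fun t : ℝ => ∑ i ∈ Finset.range (N + 1), h (i + 2) *
        ((t : ℂ) ^ (i + 2) - p.eval (γ t) ^ (i + 2)))
        =O[nhdsWithin 0 (Ioi 0)] (fun t : ℝ => t ^ (N + 2)) := by
      refine IsBigO.fun_sum fun i _ => ?_
      exact ((hpow (i + 1)).trans (isBigO_pow_right (by omega))).const_mul_left _
    have := (hs.add hφ).const_mul_left (-I * (1 + I * h 1)⁻¹)
    refine this.congr_left fun t => ?_
    have ht : (t : ℂ) = (1 + I * h 1)⁻¹ * ((1 + I * h 1) * t) := by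
      rw [inv_mul_cancel_left₀ h1]
    have hsum : ∑ j ∈ Finset.range (N + 2 + 1), h j * (t : ℂ) ^ j =
        ∑ i ∈ Finset.range (N + 1), h (i + 2) * (t : ℂ) ^ (i + 2) + h 1 * t := by
      rw [Finset.sum_range_succ', Finset.sum_range_succ', h0]
      simp
    rw [hsum]
    simp only [Polynomial.eval_mul, Polynomial.eval_sub, Polynomial.eval_C, Polynomial.eval_X,
      Polynomial.eval_finsetSum, Polynomial.eval_pow, mul_sub, Finset.sum_sub_distrib]
    conv_rhs => rw [ht]
    generalize ∑ i ∈ Finset.range (N + 1), h (i + 2) * Polynomial.eval (γ t) p ^ (i + 2) = S₁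
    generalize ∑ i ∈ Finset.range (N + 1), h (i + 2) * (t : ℂ) ^ (i + 2) = S₂
    rw [hγ]
    ring

/-- Every monomial `γ ^ j * conj γ ^ k` has an asymptotic expansion in powers of `γ`, since
`conj γ = 2 * t - γ`; by `expansion_unique` the coefficients do not depend on the order `N`. -/
lemma exists_expansion {φ : ℝ → ℝ} {h : ℕ → ℂ} (hT : HasTaylorSeries1At φ h)
    (h0 : h 0 = 0) (h1 : 1 + I * h 1 ≠ 0) {γ : ℝ → ℂ} (hγ : ∀ t, γ t = t + I * φ t)
    (hO : γ =O[nhdsWithin 0 (Ioi 0)] (fun t : ℝ => t)) :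
    ∃ α : ℕ → ℕ → ℕ → ℂ, ∀ j k N, (fun t : ℝ => γ t ^ j * (starRingEnd ℂ (γ t)) ^ k -
      ∑ n ∈ Finset.range (N + 1), α j k n * γ t ^ n)
      =O[nhdsWithin 0 (Ioi 0)] (fun t : ℝ => t ^ (N + 1)) := by
  have hre : ∀ t, (γ t).re = t := fun t => by simp [hγ]
  have key : ∀ j k N, ∃ q : Polynomial ℂ, (fun t : ℝ => γ t ^ j * (starRingEnd ℂ (γ t)) ^ k -
      q.eval (γ t)) =O[nhdsWithin 0 (Ioi 0)] (fun t : ℝ => t ^ (N + 1)) := by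
    intro j k N
    obtain ⟨p, hp⟩ := exists_param_expansion hT h0 h1 hγ N
    refine ⟨Polynomial.X ^ j * (Polynomial.C 2 * p - Polynomial.X) ^ k, ?_⟩
    have hc : (fun t => starRingEnd ℂ (γ t)) =O[nhdsWithin 0 (Ioi 0)] (fun _ => (1 : ℝ)) := by
      refine IsBigO.trans (IsBigO.of_bound 1 (Eventually.of_forall fun t => ?_))
        (eval_curve_isBigO hO Polynomial.X)
      simp
    have hd : (fun t => starRingEnd ℂ (γ t) - (Polynomial.C 2 * p - Polynomial.X).eval (γ t))
        =O[nhdsWithin 0 (Ioi 0)] (fun t : ℝ => t ^ (N + 1)) := by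
      refine (hp.const_mul_left 2).congr_left fun t => ?_
      simp only [Polynomial.eval_mul, Polynomial.eval_sub, Polynomial.eval_C, Polynomial.eval_X]
      rw [hγ]
      simp only [map_add, map_mul, conj_ofReal, conj_I]
      ring
    have := (eval_curve_isBigO hO (Polynomial.X ^ j)).mul
      (pow_sub_pow_isBigO hc (eval_curve_isBigO hO _) hd k)
    simp only [one_mul] at this
    refine this.congr_left fun t => ?_
    simp only [Polynomial.eval_mul, Polynomial.eval_pow, Polynomial.eval_X]
    ring
  choose q hq using key
  refine ⟨fun j k n => (q j k n).coeff n, fun j k N => ?_⟩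
  have hcoh : ∀ n ≤ N, (q j k n).coeff n = (q j k N).coeff n := by
    intro n hn
    have h1 : (fun t => (q j k n - q j k N).eval (γ t)) =o[nhdsWithin 0 (Ioi 0)]
        (fun t : ℝ => t ^ n) := by
      have := ((hq j k N).trans (isBigO_pow_right (Nat.succ_le_succ hn))).sub (hq j k n)
      refine (this.congr_left fun t => ?_).trans_isLittleO (isLittleO_pow_right n.lt_succ_self)
      simp
    have := expansion_unique hre hO _ n h1 n le_rfl
    simpa [sub_eq_zero] using this
  obtain ⟨r, hr⟩ : Polynomial.X ^ (N + 1) ∣ q j k N -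
      ∑ n ∈ Finset.range (N + 1), Polynomial.C ((q j k N).coeff n) * Polynomial.X ^ n := by
    refine Polynomial.X_pow_dvd_iff.2 fun d hd => ?_
    simp [Polynomial.coeff_X_pow]
    rw [if_pos (Nat.lt_succ_iff.1 hd), sub_self]
  have h2 : (fun t => (γ t) ^ (N + 1) * r.eval (γ t)) =O[nhdsWithin 0 (Ioi 0)]
      (fun t : ℝ => t ^ (N + 1)) := by
    simpa using (hO.pow (N + 1)).mul (eval_curve_isBigO hO r)
  refine ((hq j k N).add h2).congr_left fun t => ?_
  have h3 := congrArg (Polynomial.eval (γ t)) hr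
  simp only [Polynomial.eval_sub, Polynomial.eval_mul, Polynomial.eval_pow, Polynomial.eval_X,
    Polynomial.eval_finsetSum, Polynomial.eval_C] at h3
  have h4 : ∑ n ∈ Finset.range (N + 1), (q j k n).coeff n * γ t ^ n =
      ∑ n ∈ Finset.range (N + 1), (q j k N).coeff n * γ t ^ n :=
    Finset.sum_congr rfl fun n hn => by
      rw [hcoh n (Nat.lt_succ_iff.1 (Finset.mem_range.1 hn))]
  rw [← h3, h4]
  ring

/-! ### Holomorphic germs along the curve -/

lemma hasFPowerSeriesAt_of_hasSum {G : ℂ → ℂ} {c : ℕ → ℂ}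
    (h : ∀ᶠ z in nhds (0 : ℂ), HasSum (fun n => c n * z ^ n) (G z)) :
    HasFPowerSeriesAt G (FormalMultilinearSeries.ofScalars ℂ c) 0 := by
  rw [hasFPowerSeriesAt_iff]
  filter_upwards [h] with z hz
  simpa [FormalMultilinearSeries.coeff_ofScalars, mul_comm] using hz

lemma isBigO_partialSum {G : ℂ → ℂ} {c : ℕ → ℂ}
    (h : ∀ᶠ z in nhds (0 : ℂ), HasSum (fun n => c n * z ^ n) (G z)) (N : ℕ) :
    (fun z => G z - ∑ n ∈ Finset.range N, c n * z ^ n) =O[nhds 0] fun z => z ^ N := by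
  have := (hasFPowerSeriesAt_of_hasSum h).isBigO_sub_partialSum_pow N
  refine IsBigO.trans ?_ (this.trans (IsBigO.of_bound 1 (Eventually.of_forall fun z => by simp)))
  refine IsBigO.of_bound 1 (Eventually.of_forall fun z => ?_)
  simp [FormalMultilinearSeries.partialSum, mul_comm]

/-- If `g` is, along the curve, the restriction of a holomorphic germ `F`, then any asymptotic
expansion of `g` in powers of `γ` is the Taylor expansion of `F`. -/
lemma curve_coeffs {γ : ℝ → ℂ} (hre : ∀ t, (γ t).re = t)
    (hO : γ =O[nhdsWithin 0 (Ioi 0)] (fun t : ℝ => t)) {F : ℂ → ℂ} {g : ℝ → ℂ}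
    (hF : AnalyticAt ℂ F 0) (hFg : ∀ᶠ t in nhdsWithin 0 (Ioi 0), g t = F (γ t)) :
    ∃ c : ℕ → ℂ, (∀ᶠ z in nhds (0 : ℂ), HasSum (fun n => c n * z ^ n) (F z)) ∧
      ∀ (N : ℕ) (e : ℕ → ℂ), (fun t => g t - ∑ n ∈ Finset.range (N + 1), e n * γ t ^ n)
        =o[nhdsWithin 0 (Ioi 0)] (fun t : ℝ => t ^ N) → ∀ n ≤ N, c n = e n := by
  obtain ⟨p, hp⟩ := hF
  have hs : ∀ᶠ z in nhds (0 : ℂ), HasSum (fun n => p.coeff n * z ^ n) (F z) := by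
    filter_upwards [hasFPowerSeriesAt_iff.1 hp] with z hz
    simpa [mul_comm] using hz
  refine ⟨fun n => p.coeff n, hs, fun N e he n hn => ?_⟩
  have h1 := ((isBigO_partialSum hs (N + 1)).comp_tendsto (tendsto_curve hO)).trans
    (hO.pow (N + 1)) |>.trans_isLittleO (isLittleO_pow_right N.lt_succ_self)
  have h2 : (fun t => (∑ n ∈ Finset.range (N + 1), Polynomial.C (p.coeff n - e n) *
      Polynomial.X ^ n).eval (γ t)) =o[nhdsWithin 0 (Ioi 0)] (fun t : ℝ => t ^ N) := by
    refine (he.sub h1).congr' ?_ EventuallyEq.rfl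
    filter_upwards [hFg] with t ht
    simp only [Polynomial.eval_finsetSum, Polynomial.eval_mul, Polynomial.eval_C,
      Polynomial.eval_pow, Polynomial.eval_X, Function.comp, sub_mul, Finset.sum_sub_distrib, ht]
    ring
  have h3 := expansion_unique hre hO _ N h2 n hn
  simp only [Polynomial.finsetSum_coeff, Polynomial.coeff_C_mul_X_pow] at h3
  rw [Finset.sum_ite_eq, if_pos (Finset.mem_range.2 (Nat.lt_succ_of_le hn))] at h3
  exact sub_eq_zero.1 h3

/-- The Taylor expansion of `f` at `0`, restricted to the curve `s * γ`. -/
lemma taylor_curve {f : ℂ → ℂ} {a : ℕ → ℕ → ℂ} (hf : HasTaylorSeries2At f a) {γ : ℝ → ℂ}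
    (hO : γ =O[nhdsWithin 0 (Ioi 0)] (fun t : ℝ => t)) (s : ℂ) (N : ℕ) :
    (fun t => f (s * γ t) - ∑ p ∈ tri N, a p.1 p.2 * s ^ p.1 * (starRingEnd ℂ s) ^ p.2 *
      (γ t ^ p.1 * (starRingEnd ℂ (γ t)) ^ p.2))
      =o[nhdsWithin 0 (Ioi 0)] (fun t : ℝ => t ^ N) := by
  have ht : Tendsto (fun t => s * γ t) (nhdsWithin 0 (Ioi 0)) (nhds 0) := by
    simpa using (tendsto_curve hO).const_mul s
  have h1 := (hf N).comp_tendsto ht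
  have h2 : ((fun z : ℂ => ‖z‖ ^ N) ∘ fun t => s * γ t) =O[nhdsWithin 0 (Ioi 0)]
      (fun t : ℝ => t ^ N) := (hO.const_mul_left s).norm_left.pow N
  refine (h1.trans_isBigO h2).congr_left fun t => ?_
  simp only [Function.comp, map_mul, mul_pow]
  congr 1
  exact Finset.sum_congr rfl fun p _ => by ring

/-- Uniqueness of analytic continuation along the curve `γ`. -/
lemma propagate {γ : ℝ → ℂ} {t₀ : ℝ} (ht₀ : 0 ≤ t₀) (hγ : ContinuousOn γ (Icc 0 t₀))
    {F G : ℂ → ℂ} {U V : Set ℂ} (hU : IsOpen U) (hV : IsOpen V) (hF : DifferentiableOn ℂ F U)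
    (hG : DifferentiableOn ℂ G V) (hγU : ∀ t ∈ Icc 0 t₀, γ t ∈ U) (hγV : ∀ t ∈ Icc 0 t₀, γ t ∈ V)
    (h0 : F =ᶠ[nhds (γ 0)] G) : ∀ t ∈ Icc 0 t₀, F (γ t) = G (γ t) := by
  have hp : IsPreconnected (γ '' Icc 0 t₀) := isPreconnected_Icc.image _ hγ
  have h1 : AnalyticOnNhd ℂ F (γ '' Icc 0 t₀) :=
    (hF.analyticOnNhd hU).mono (by rintro _ ⟨t, ht, rfl⟩; exact hγU t ht)
  have h2 : AnalyticOnNhd ℂ G (γ '' Icc 0 t₀) :=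
    (hG.analyticOnNhd hV).mono (by rintro _ ⟨t, ht, rfl⟩; exact hγV t ht)
  intro t ht
  exact h1.eqOn_of_preconnected_of_eventuallyEq h2 hp ⟨0, ⟨le_rfl, ht₀⟩, rfl⟩ h0 ⟨t, ht, rfl⟩

lemma exists_geometric_bound {c : ℕ → ℂ} {G : ℂ → ℂ}
    (h : ∀ᶠ z in nhds (0 : ℂ), HasSum (fun n => c n * z ^ n) (G z)) :
    ∃ M : ℕ, ∀ n, ‖c n‖ ≤ (M : ℝ) ^ (n + 1) := by
  obtain ⟨ε, hε, hb⟩ := Metric.eventually_nhds_iff.1 h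
  have hs := hb (y := ((ε / 2 : ℝ) : ℂ)) (by
    rw [dist_zero_right, norm_real, Real.norm_of_nonneg (by positivity)]; linarith)
  obtain ⟨K, hK⟩ := hs.summable.tendsto_atTop_zero.norm.bddAbove_range
  have hx : 0 < ε / 2 := by positivity
  have hK' : ∀ n, ‖c n‖ * (ε / 2) ^ n ≤ K := fun n => by
    have := hK ⟨n, rfl⟩
    simpa only [norm_mul, norm_pow, norm_real, Real.norm_of_nonneg hx.le] using this
  have hK0 : 0 ≤ K := (mul_nonneg (norm_nonneg _) (by positivity)).trans (hK' 0)
  obtain ⟨M, hM⟩ := exists_nat_ge (K + (ε / 2)⁻¹)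
  refine ⟨M, fun n => ?_⟩
  have hi : 0 < (ε / 2)⁻¹ := by positivity
  calc ‖c n‖ = ‖c n‖ * (ε / 2) ^ n * (ε / 2)⁻¹ ^ n := by
        rw [mul_assoc, ← mul_pow, mul_inv_cancel₀ hx.ne', one_pow, mul_one]
    _ ≤ M * (M : ℝ) ^ n := by
        have h1 : K ≤ M := by linarith
        have h2 : (ε / 2)⁻¹ ≤ M := by linarith
        have h3 := hK' n
        gcongr
        exact h3.trans h1
    _ = (M : ℝ) ^ (n + 1) := by ring

/-- Baire category: if for each `s` in a nonempty open set the sequence `c n s` grows at most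
geometrically, then on some ball it does so uniformly in `s`. -/
lemma exists_uniform_bound {E : Set ℂ} (hE : IsOpen E) (hne : E.Nonempty) (c : ℕ → ℂ → ℂ)
    (hc : ∀ n, Continuous (c n)) (h : ∀ s ∈ E, ∃ M : ℕ, ∀ n, ‖c n s‖ ≤ (M : ℝ) ^ (n + 1)) :
    ∃ s₀ ρ, ∃ M : ℝ, 0 < ρ ∧ 1 ≤ M ∧ Metric.ball s₀ ρ ⊆ E ∧
      ∀ s ∈ Metric.ball s₀ ρ, ∀ n, ‖c n s‖ ≤ M ^ (n + 1) := by
  let S : ℕ → Set ℂ := fun M => {s | ∀ n, ‖c n s‖ ≤ (M : ℝ) ^ (n + 1)}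
  have hS : ∀ M, IsClosed (S M) := fun M => by
    simp only [S, ofPred_forall]
    exact isClosed_iInter fun n => isClosed_le (hc n).norm continuous_const
  -- adjoining the complement of `E` makes the closed sets cover the whole plane
  have hd := dense_iUnion_interior_of_closed (f := fun M => S M ∪ Eᶜ)
    (fun M => (hS M).union hE.isClosed_compl) (by
      rw [eq_univ_iff_forall]
      intro s
      by_cases hs : s ∈ E
      · obtain ⟨M, hM⟩ := h s hs
        exact mem_iUnion.2 ⟨M, Or.inl hM⟩
      · exact mem_iUnion.2 ⟨0, Or.inr hs⟩)
  obtain ⟨s₀, hs₀E, hs₀⟩ := hd.inter_open_nonempty E hE hne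
  obtain ⟨M, hM⟩ := mem_iUnion.1 hs₀
  obtain ⟨ρ, hρ, hball⟩ := Metric.isOpen_iff.1 (hE.inter isOpen_interior) s₀ ⟨hs₀E, hM⟩
  refine ⟨s₀, ρ, max M 1, hρ, le_max_right _ _, fun s hs => (hball hs).1, fun s hs n => ?_⟩
  rcases interior_subset (hball hs).2 with h1 | h1
  · exact (h1 n).trans (pow_le_pow_left₀ (Nat.cast_nonneg M) (le_max_left _ _) _)
  · exact absurd (hball hs).1 h1

/-! ### Transport of coefficients along the curve -/

lemma geometric_tail {u : ℕ → ℂ} {A : ℂ} {M r : ℝ} (hM : 0 ≤ M) (hr0 : 0 ≤ r) (hr : r ≤ 1 / 2)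
    (h : HasSum u A) (hu : ∀ n, ‖u n‖ ≤ M * r ^ n) (N : ℕ) :
    ‖∑ n ∈ Finset.range (N + 1), u n - A‖ ≤ M * r ^ N := by
  have h1 := dist_le_of_le_geometric_of_tendsto (f := fun N => ∑ n ∈ Finset.range N, u n) r M
    (by linarith) (fun n => by
      rw [Finset.sum_range_succ, dist_self_add_right]; exact hu n) h.tendsto_sum_nat (N + 1)
  rw [dist_eq_norm] at h1
  refine h1.trans ?_
  rw [div_le_iff₀ (by linarith), pow_succ]
  have : 0 ≤ M * r ^ N := by positivity
  nlinarith

/-- The Taylor series at `0` of a function holomorphic near the curve still sums to that function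
along the curve, as long as the curve stays in a disc where the coefficient bound forces
convergence. -/
lemma hasSum_curve {γ : ℝ → ℂ} {t₀ : ℝ} (ht₀ : 0 ≤ t₀) (hγ : ContinuousOn γ (Icc 0 t₀))
    (hγ0 : γ 0 = 0) {c : ℕ → ℂ} {M : ℝ} (hM : 1 ≤ M) (hc : ∀ n, ‖c n‖ ≤ M ^ (n + 1))
    (hτ : ∀ t ∈ Icc 0 t₀, ‖γ t‖ < 1 / (2 * M)) {F : ℂ → ℂ} {U : Set ℂ} (hU : IsOpen U)
    (hF : DifferentiableOn ℂ F U) (hγU : ∀ t ∈ Icc 0 t₀, γ t ∈ U)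
    (hs : ∀ᶠ z in nhds (0 : ℂ), HasSum (fun n => c n * z ^ n) (F z)) :
    ∀ t ∈ Icc 0 t₀, HasSum (fun n => c n * γ t ^ n) (F (γ t)) := by
  have hM0 : 0 < M := by linarith
  have hu : Summable fun n : ℕ => M * (1 / 2 : ℝ) ^ n := summable_geometric_two.mul_left M
  have hb : ∀ n, ∀ z ∈ Metric.ball (0 : ℂ) (1 / (2 * M)), ‖c n * z ^ n‖ ≤ M * (1 / 2 : ℝ) ^ n := by
    intro n z hz
    rw [mem_ball_zero_iff] at hz
    have h1 : M * ‖z‖ ≤ 1 / 2 := by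
      rw [lt_div_iff₀ (by positivity)] at hz; linarith
    rw [norm_mul, norm_pow]
    calc ‖c n‖ * ‖z‖ ^ n ≤ M ^ (n + 1) * ‖z‖ ^ n := by gcongr; exact hc n
      _ = M * (M * ‖z‖) ^ n := by ring
      _ ≤ _ := by gcongr
  have hsum : ∀ z ∈ Metric.ball (0 : ℂ) (1 / (2 * M)), Summable fun n => c n * z ^ n :=
    fun z hz => Summable.of_norm_bounded hu fun n => hb n z hz
  have hG : DifferentiableOn ℂ (fun z => ∑' n, c n * z ^ n) (Metric.ball (0 : ℂ) (1 / (2 * M))) :=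
    differentiableOn_tsum_of_summable_norm hu (fun n => by fun_prop) Metric.isOpen_ball hb
  have key := propagate ht₀ hγ hU Metric.isOpen_ball hF hG hγU
    (fun t ht => mem_ball_zero_iff.2 (hτ t ht)) (by
      rw [hγ0]
      filter_upwards [hs] with z hz using hz.tsum_eq.symm)
  intro t ht
  rw [key t ht]
  exact (hsum _ (mem_ball_zero_iff.2 (hτ t ht))).hasSum

/-- The same value of `f` is reached as `s * γ₁` and as `(s * γ₁ / γ₂) * γ₂`, for two close points
`γ₁`, `γ₂` of the curve, and so has two expansions. Truncated at order `N`, they are polynomials of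
degree `N` in `s` and `conj s` that differ by `O((1 / (2 * C)) ^ N)`, so by `bi_coeff_bound` their
coefficients differ by `O((1 / 2) ^ N)`. In the limit, the coefficient sums `A₁`, `A₂` transform
like the monomial `z ^ j * conj z ^ k`. -/
lemma coeff_transport {f : ℂ → ℂ} {s₀ : ℂ} {ρ M C : ℝ} (hρ : 0 < ρ) (hM : 1 ≤ M) (hC1 : 1 ≤ C)
    (hC : ∀ (n : ℕ) (β : ℕ → ℕ → ℂ) (B : ℝ),
      (∀ s ∈ Metric.ball s₀ (ρ / 2),
        ‖∑ p ∈ tri n, β p.1 p.2 * s ^ p.1 * (starRingEnd ℂ s) ^ p.2‖ ≤ B) →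
      ∀ j k, j + k ≤ n → ‖β j k‖ ≤ B * C ^ n)
    {β : ℕ → ℕ → ℕ → ℂ} {c : ℕ → ℂ → ℂ}
    (hcβ : ∀ s ∈ Metric.ball s₀ ρ, ∀ N, ∀ n ≤ N,
      c n s = ∑ p ∈ tri N, β p.1 p.2 n * s ^ p.1 * (starRingEnd ℂ s) ^ p.2)
    (hcM : ∀ s ∈ Metric.ball s₀ ρ, ∀ n, ‖c n s‖ ≤ M ^ (n + 1))
    {γ₁ γ₂ : ℂ} (hγ₂0 : γ₂ ≠ 0) (hγ₁ : ‖γ₁‖ ≤ 1 / (2 * M * C)) (hγ₂ : ‖γ₂‖ ≤ 1 / (2 * M * C))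
    (hclose : ‖γ₁ / γ₂ - 1‖ * (‖s₀‖ + ρ) < ρ / 2)
    (h₁ : ∀ s ∈ Metric.ball s₀ ρ, HasSum (fun n => c n s * γ₁ ^ n) (f (s * γ₁)))
    (h₂ : ∀ s ∈ Metric.ball s₀ ρ, HasSum (fun n => c n s * γ₂ ^ n) (f (s * γ₂)))
    {j k : ℕ} {A₁ A₂ : ℂ} (hA₁ : HasSum (fun n => β j k n * γ₁ ^ n) A₁)
    (hA₂ : HasSum (fun n => β j k n * γ₂ ^ n) A₂) :
    A₁ = A₂ * ((γ₁ / γ₂) ^ j * (starRingEnd ℂ (γ₁ / γ₂)) ^ k) := by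
  set κ := γ₁ / γ₂ with hκ
  have hM0 : 0 < M := by linarith
  have hC0 : 0 < C := by linarith
  set r : ℝ := 1 / (2 * C) with hr
  have hr0 : 0 < r := by positivity
  have hr2 : r ≤ 1 / 2 := by
    rw [hr]; gcongr; linarith
  have hMr : ∀ γ : ℂ, ‖γ‖ ≤ 1 / (2 * M * C) → M * ‖γ‖ ≤ r := by
    intro γ h
    calc M * ‖γ‖ ≤ M * (1 / (2 * M * C)) := by gcongr
      _ = r := by rw [hr]; field_simp
  have htail : ∀ γ : ℂ, ‖γ‖ ≤ 1 / (2 * M * C) → ∀ s ∈ Metric.ball s₀ ρ,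
      HasSum (fun n => c n s * γ ^ n) (f (s * γ)) → ∀ N,
      ‖∑ n ∈ Finset.range (N + 1), c n s * γ ^ n - f (s * γ)‖ ≤ M * r ^ N := by
    intro γ hγ s hs h N
    refine geometric_tail hM0.le hr0.le hr2 h (fun n => ?_) N
    rw [norm_mul, norm_pow]
    calc ‖c n s‖ * ‖γ‖ ^ n ≤ M ^ (n + 1) * ‖γ‖ ^ n := by gcongr; exact hcM s hs n
      _ = M * (M * ‖γ‖) ^ n := by ring
      _ ≤ _ := by gcongr; exact hMr γ hγ
  -- the coefficients of the difference of the two truncated expansions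
  let d : ℕ → ℕ → ℕ → ℂ := fun N j k =>
    ∑ n ∈ Finset.range (N + 1), β j k n * γ₁ ^ n -
    (∑ n ∈ Finset.range (N + 1), β j k n * γ₂ ^ n) * (κ ^ j * (starRingEnd ℂ κ) ^ k)
  have hd : ∀ N, ∀ s ∈ Metric.ball s₀ (ρ / 2),
      ‖∑ p ∈ tri N, d N p.1 p.2 * s ^ p.1 * (starRingEnd ℂ s) ^ p.2‖ ≤ 2 * M * r ^ N := by
    intro N s hs
    have hsρ : s ∈ Metric.ball s₀ ρ := Metric.ball_subset_ball (by linarith) hs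
    have hs'ρ : s * κ ∈ Metric.ball s₀ ρ := by
      rw [mem_ball_iff_norm] at hs ⊢
      have e : s * κ - s₀ = (s - s₀) + (κ - 1) * s := by ring
      have hsn : ‖s‖ ≤ ‖s₀‖ + ρ := by
        have := norm_add_le (s - s₀) s₀
        rw [sub_add_cancel] at this
        linarith
      rw [e]
      refine (norm_add_le _ _).trans_lt ?_
      rw [norm_mul]
      have : ‖κ - 1‖ * ‖s‖ ≤ ‖κ - 1‖ * (‖s₀‖ + ρ) := by gcongr
      linarith
    have hprod : s * κ * γ₂ = s * γ₁ := by rw [hκ]; field_simp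
    have e1 : ∀ s ∈ Metric.ball s₀ ρ, ∀ γ : ℂ, ∑ n ∈ Finset.range (N + 1), c n s * γ ^ n =
        ∑ p ∈ tri N, (∑ n ∈ Finset.range (N + 1), β p.1 p.2 n * γ ^ n) * s ^ p.1 *
          (starRingEnd ℂ s) ^ p.2 := by
      intro s hs γ
      simp only [Finset.sum_mul]
      rw [Finset.sum_comm]
      refine Finset.sum_congr rfl fun n hn => ?_
      rw [hcβ s hs N n (Nat.lt_succ_iff.1 (Finset.mem_range.1 hn)), Finset.sum_mul]
      exact Finset.sum_congr rfl fun p _ => by ring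
    have e2 : ∑ p ∈ tri N, d N p.1 p.2 * s ^ p.1 * (starRingEnd ℂ s) ^ p.2 =
        (∑ n ∈ Finset.range (N + 1), c n s * γ₁ ^ n - f (s * γ₁)) -
        (∑ n ∈ Finset.range (N + 1), c n (s * κ) * γ₂ ^ n - f (s * κ * γ₂)) := by
      rw [e1 s hsρ, e1 (s * κ) hs'ρ, hprod]
      simp only [d, sub_mul, Finset.sum_sub_distrib, map_mul, mul_pow]
      rw [sub_sub_sub_cancel_right]
      congr 1
      exact Finset.sum_congr rfl fun p _ => by ring
    rw [e2]
    refine (norm_sub_le _ _).trans ?_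
    have h3 := htail γ₁ hγ₁ s hsρ (h₁ s hsρ) N
    have h4 := htail γ₂ hγ₂ (s * κ) hs'ρ (h₂ _ hs'ρ) N
    linarith
  have hlim : Tendsto (fun N => d N j k) atTop
      (nhds (A₁ - A₂ * (κ ^ j * (starRingEnd ℂ κ) ^ k))) :=
    ((tendsto_add_atTop_iff_nat 1).2 hA₁.tendsto_sum_nat).sub
      (((tendsto_add_atTop_iff_nat 1).2 hA₂.tendsto_sum_nat).mul_const _)
  have hzero : Tendsto (fun N => d N j k) atTop (nhds 0) := by
    refine squeeze_zero_norm' (a := fun N => 2 * M * (1 / 2 : ℝ) ^ N) ?_ ?_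
    · filter_upwards [eventually_ge_atTop (j + k)] with N hN
      refine (hC N (d N) _ (hd N) j k hN).trans_eq ?_
      rw [mul_assoc, ← mul_pow]
      congr 2
      rw [hr]; field_simp
    · simpa using (tendsto_pow_atTop_nhds_zero_of_lt_one (by norm_num : (0:ℝ) ≤ 1 / 2)
        (by norm_num)).const_mul (2 * M)
  exact sub_eq_zero.1 (tendsto_nhds_unique hlim hzero)

/-- The Taylor coefficients of the holomorphic germ equal to `f (s * γ)` along `γ` are polynomials in
`s` and `conj s`: substitute the expansions of `γ ^ j * conj γ ^ k` into the Taylor series of `f`. -/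
lemma germ_coeffs {f : ℂ → ℂ} {a : ℕ → ℕ → ℂ} (hf : HasTaylorSeries2At f a) {γ : ℝ → ℂ}
    (hre : ∀ t, (γ t).re = t) (hO : γ =O[nhdsWithin 0 (Ioi 0)] (fun t : ℝ => t))
    {α : ℕ → ℕ → ℕ → ℂ} (hα : ∀ j k N, (fun t : ℝ => γ t ^ j * (starRingEnd ℂ (γ t)) ^ k -
      ∑ n ∈ Finset.range (N + 1), α j k n * γ t ^ n)
      =O[nhdsWithin 0 (Ioi 0)] (fun t : ℝ => t ^ (N + 1)))
    {s : ℂ} {F : ℂ → ℂ} (hF : AnalyticAt ℂ F 0)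
    (hFg : ∀ᶠ t in nhdsWithin 0 (Ioi 0), f (s * γ t) = F (γ t)) :
    ∃ c : ℕ → ℂ, (∀ᶠ z in nhds (0 : ℂ), HasSum (fun n => c n * z ^ n) (F z)) ∧
      ∀ N, ∀ n ≤ N, c n =
        ∑ p ∈ tri N, a p.1 p.2 * α p.1 p.2 n * s ^ p.1 * (starRingEnd ℂ s) ^ p.2 := by
  obtain ⟨c, hc, hu⟩ := curve_coeffs hre hO hF hFg
  refine ⟨c, hc, fun N => hu N (fun n =>
    ∑ p ∈ tri N, a p.1 p.2 * α p.1 p.2 n * s ^ p.1 * (starRingEnd ℂ s) ^ p.2) ?_⟩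
  have h1 := taylor_curve hf hO s N
  have h2 : (fun t => ∑ p ∈ tri N, (a p.1 p.2 * s ^ p.1 * (starRingEnd ℂ s) ^ p.2) *
      (γ t ^ p.1 * (starRingEnd ℂ (γ t)) ^ p.2 -
        ∑ n ∈ Finset.range (N + 1), α p.1 p.2 n * γ t ^ n))
      =o[nhdsWithin 0 (Ioi 0)] (fun t : ℝ => t ^ N) :=
    (IsBigO.fun_sum fun p _ => (hα p.1 p.2 N).const_mul_left _).trans_isLittleO
      (isLittleO_pow_right N.lt_succ_self)
  refine (h1.add h2).congr_left fun t => ?_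
  simp only [mul_sub, Finset.sum_sub_distrib]
  have : ∑ n ∈ Finset.range (N + 1), (∑ p ∈ tri N, a p.1 p.2 * α p.1 p.2 n * s ^ p.1 *
      (starRingEnd ℂ s) ^ p.2) * γ t ^ n = ∑ p ∈ tri N, a p.1 p.2 * s ^ p.1 *
      (starRingEnd ℂ s) ^ p.2 * ∑ n ∈ Finset.range (N + 1), α p.1 p.2 n * γ t ^ n := by
    simp only [Finset.sum_mul, Finset.mul_sum]
    rw [Finset.sum_comm]
    exact Finset.sum_congr rfl fun p _ => Finset.sum_congr rfl fun n _ => by ring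
  rw [this]
  ring

lemma exists_small_curve {γ : ℝ → ℂ} {b : ℝ} (hb : 0 < b) (hγc : ContinuousOn γ (Icc 0 b))
    (hγ0 : γ 0 = 0) {δ : ℝ} (hδ : 0 < δ) :
    ∃ t₀, 0 < t₀ ∧ t₀ < b ∧ ∀ t ∈ Icc 0 t₀, ‖γ t‖ < δ := by
  have h1 := hγc 0 (left_mem_Icc.2 hb.le)
  rw [ContinuousWithinAt, hγ0] at h1
  have h2 := h1.eventually (Metric.ball_mem_nhds 0 hδ)
  obtain ⟨ε, hε, h3⟩ := Metric.mem_nhdsWithin_iff.1 h2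
  refine ⟨min (ε / 2) (b / 2), by positivity, (min_le_right _ _).trans_lt (by linarith),
    fun t ht => ?_⟩
  have h4 := ht.2.trans (min_le_left _ _)
  have h5 := ht.2.trans (min_le_right _ _)
  have := h3 ⟨by rw [mem_ball_zero_iff, Real.norm_eq_abs, abs_of_nonneg ht.1]; linarith,
    ht.1, by linarith⟩
  simpa using this

/-- Along the curve, the monomial `a j k * γ ^ j * conj γ ^ k` coincides with a holomorphic germ
`G`, the sum of its own formal expansion in powers of `γ`. That expansion converges by
`exists_uniform_bound` and `bi_coeff_bound`; `coeff_transport` makes `G γ / (γ ^ j * conj γ ^ k)`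
locally constant, and its limit at `0` is `a j k`. -/
lemma monomial_germ {f : ℂ → ℂ} {a : ℕ → ℕ → ℂ} (hf : HasTaylorSeries2At f a) {γ : ℝ → ℂ}
    (hre : ∀ t, (γ t).re = t) (hO : γ =O[nhdsWithin 0 (Ioi 0)] (fun t : ℝ => t))
    {α : ℕ → ℕ → ℕ → ℂ} (hα : ∀ j k N, (fun t : ℝ => γ t ^ j * (starRingEnd ℂ (γ t)) ^ k -
      ∑ n ∈ Finset.range (N + 1), α j k n * γ t ^ n)
      =O[nhdsWithin 0 (Ioi 0)] (fun t : ℝ => t ^ (N + 1)))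
    {b : ℝ} (hb : 0 < b) (hγc : ContinuousOn γ (Icc 0 b)) (hγ0 : γ 0 = 0)
    {Ω : Set ℂ} (hΩ : IsOpen Ω) (h0Ω : (0 : ℂ) ∈ Ω) {E : Set ℂ} (hE : IsOpen E)
    (hne : E.Nonempty)
    (hext : ∀ s ∈ E, ∃ U F, IsOpen U ∧ DifferentiableOn ℂ F U ∧
      ∀ t, 0 ≤ t → t < b → s * γ t ∈ Ω → γ t ∈ U ∧ f (s * γ t) = F (γ t)) (j k : ℕ) :
    ∃ G : ℂ → ℂ, AnalyticAt ℂ G 0 ∧ ∀ᶠ t in nhdsWithin 0 (Ioi 0),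
      G (γ t) = a j k * (γ t ^ j * (starRingEnd ℂ (γ t)) ^ k) := by
  obtain ⟨ε, hε, hεΩ⟩ := Metric.isOpen_iff.1 hΩ 0 h0Ω
  let β : ℕ → ℕ → ℕ → ℂ := fun j k n => a j k * α j k n
  let c : ℕ → ℂ → ℂ := fun n s =>
    ∑ p ∈ tri n, β p.1 p.2 n * s ^ p.1 * (starRingEnd ℂ s) ^ p.2
  have hccont : ∀ n, Continuous (c n) := fun n => by
    refine continuous_finsetSum _ fun p _ => ?_
    exact (continuous_const.mul (continuous_pow _)).mul (Complex.continuous_conj.pow _)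
  have hloc : ∀ s ∈ E, ∃ U F, IsOpen U ∧ DifferentiableOn ℂ F U ∧
      (∀ t, 0 ≤ t → t < b → s * γ t ∈ Ω → γ t ∈ U ∧ f (s * γ t) = F (γ t)) ∧
      (∀ᶠ z in nhds (0 : ℂ), HasSum (fun n => c n s * z ^ n) (F z)) ∧
      (∀ N, ∀ n ≤ N, c n s = ∑ p ∈ tri N, β p.1 p.2 n * s ^ p.1 * (starRingEnd ℂ s) ^ p.2) := by
    intro s hs
    obtain ⟨U, F, hU, hF, h⟩ := hext s hs
    have h0U : (0 : ℂ) ∈ U := by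
      have := (h 0 le_rfl hb (by rw [hγ0, mul_zero]; exact h0Ω)).1
      rwa [hγ0] at this
    have hev : ∀ᶠ t in nhdsWithin (0 : ℝ) (Ioi 0), f (s * γ t) = F (γ t) := by
      have h1 : Tendsto (fun t => s * γ t) (nhdsWithin 0 (Ioi 0)) (nhds 0) := by
        simpa using (tendsto_curve hO).const_mul s
      filter_upwards [h1.eventually (hΩ.mem_nhds h0Ω), Ioo_mem_nhdsGT hb] with t ht htb
      exact (h t htb.1.le htb.2 ht).2
    obtain ⟨c', hc', hu⟩ := germ_coeffs hf hre hO hα (hF.analyticAt (hU.mem_nhds h0U)) hev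
    have hcc : ∀ n, c' n = c n s := fun n => hu n n le_rfl
    simp only [hcc] at hc' hu
    exact ⟨U, F, hU, hF, h, hc', hu⟩
  obtain ⟨s₀, ρ, M, hρ, hM, hball, hcM⟩ := exists_uniform_bound hE hne c hccont (by
    intro s hs
    obtain ⟨U, F, -, -, -, h, -⟩ := hloc s hs
    exact exists_geometric_bound h)
  have hcβ : ∀ s ∈ Metric.ball s₀ ρ, ∀ N, ∀ n ≤ N,
      c n s = ∑ p ∈ tri N, β p.1 p.2 n * s ^ p.1 * (starRingEnd ℂ s) ^ p.2 := by
    intro s hs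
    obtain ⟨U, F, -, -, -, -, h⟩ := hloc s (hball hs)
    exact h
  obtain ⟨C, hC1, hC⟩ := bi_coeff_bound s₀ (ρ / 2) (by positivity)
  have hM0 : 0 < M := by linarith
  have hC0 : 0 < C := by linarith
  have hβ : ∀ n, j + k ≤ n → ‖β j k n‖ ≤ M ^ (n + 1) * C ^ n := by
    intro n hn
    refine hC n (fun j k => β j k n) _ (fun s hs => ?_) j k hn
    exact hcM s (Metric.ball_subset_ball (by linarith) hs) n
  have hden : 0 < ‖s₀‖ + ρ := by positivity
  obtain ⟨t₀, ht₀, ht₀b, hsmall⟩ := exists_small_curve hb hγc hγ0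
    (δ := min (1 / (2 * M * C)) (ε / (‖s₀‖ + ρ))) (by positivity)
  have hγc' : ContinuousOn γ (Icc 0 t₀) := hγc.mono (Icc_subset_Icc_right ht₀b.le)
  have hsm1 : ∀ t ∈ Icc 0 t₀, ‖γ t‖ < 1 / (2 * M * C) := fun t ht =>
    (hsmall t ht).trans_le (min_le_left _ _)
  have hsm2 : ∀ t ∈ Icc 0 t₀, ‖γ t‖ < 1 / (2 * M) := fun t ht =>
    (hsm1 t ht).trans_le (one_div_le_one_div_of_le (by positivity) (by nlinarith))
  have hΩs : ∀ s ∈ Metric.ball s₀ ρ, ∀ t ∈ Icc 0 t₀, s * γ t ∈ Ω := by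
    intro s hs t ht
    apply hεΩ
    rw [mem_ball_zero_iff, norm_mul]
    rw [mem_ball_iff_norm] at hs
    have hsn : ‖s‖ ≤ ‖s₀‖ + ρ := by
      have := norm_add_le (s - s₀) s₀
      rw [sub_add_cancel] at this
      linarith
    have h2 := (hsmall t ht).trans_le (min_le_right _ _)
    rw [lt_div_iff₀ hden] at h2
    have : ‖s‖ * ‖γ t‖ ≤ (‖s₀‖ + ρ) * ‖γ t‖ := by gcongr
    linarith
  have hsumf : ∀ t ∈ Icc 0 t₀, ∀ s ∈ Metric.ball s₀ ρ,
      HasSum (fun n => c n s * γ t ^ n) (f (s * γ t)) := by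
    intro t ht s hs
    obtain ⟨U, F, hU, hF, h, hsum, -⟩ := hloc s (hball hs)
    have key := fun t (ht : t ∈ Icc 0 t₀) => h t ht.1 (ht.2.trans_lt ht₀b) (hΩs s hs t ht)
    rw [(key t ht).2]
    exact hasSum_curve ht₀.le hγc' hγ0 hM (fun n => hcM s hs n) hsm2 hU hF
      (fun t ht => (key t ht).1) hsum t ht
  let G : ℂ → ℂ := fun z => ∑' n, β j k n * z ^ n
  have hGsum : ∀ z : ℂ, ‖z‖ < 1 / (2 * M * C) → HasSum (fun n => β j k n * z ^ n) (G z) := by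
    intro z hz
    refine Summable.hasSum ?_
    refine Summable.of_norm_bounded_eventually_nat (g := fun n => M * (1 / 2 : ℝ) ^ n)
      (summable_geometric_two.mul_left M) ?_
    filter_upwards [eventually_ge_atTop (j + k)] with n hn
    have h1 : M * C * ‖z‖ ≤ 1 / 2 := by
      rw [lt_div_iff₀ (by positivity)] at hz
      linarith
    rw [norm_mul, norm_pow]
    calc ‖β j k n‖ * ‖z‖ ^ n ≤ M ^ (n + 1) * C ^ n * ‖z‖ ^ n := by gcongr; exact hβ n hn
      _ = M * (M * C * ‖z‖) ^ n := by ring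
      _ ≤ _ := by gcongr
  have hGev : ∀ᶠ z in nhds (0 : ℂ), HasSum (fun n => β j k n * z ^ n) (G z) := by
    filter_upwards [Metric.ball_mem_nhds (0 : ℂ) (by positivity : 0 < 1 / (2 * M * C))] with z hz
    exact hGsum z (mem_ball_zero_iff.1 hz)
  have hγne : ∀ t, 0 < t → γ t ≠ 0 := fun t ht h0 => by
    have := hre t
    rw [h0, zero_re] at this
    exact ht.ne this
  let m : ℝ → ℂ := fun t => γ t ^ j * (starRingEnd ℂ (γ t)) ^ k
  have hmne : ∀ t, 0 < t → m t ≠ 0 := fun t ht =>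
    mul_ne_zero (pow_ne_zero _ (hγne t ht))
      (pow_ne_zero _ ((map_ne_zero _).2 (hγne t ht)))
  let q : ℝ → ℂ := fun t => G (γ t) / m t
  have hqloc : ∀ t ∈ Ioo 0 t₀, q =ᶠ[nhds t] fun _ => q t := by
    intro t ht
    have htI : t ∈ Icc 0 t₀ := ⟨ht.1.le, ht.2.le⟩
    have hct : ContinuousAt γ t := hγc'.continuousAt (Icc_mem_nhds ht.1 ht.2)
    have hlim : Tendsto (fun u => ‖γ u / γ t - 1‖ * (‖s₀‖ + ρ)) (nhds t) (nhds 0) := by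
      have h1 : Tendsto (fun u => γ u / γ t) (nhds t) (nhds 1) := by
        have := hct.tendsto.div_const (γ t)
        rwa [div_self (hγne t ht.1)] at this
      simpa using (h1.sub_const 1).norm.mul_const (‖s₀‖ + ρ)
    filter_upwards [hlim.eventually (gt_mem_nhds (by positivity : 0 < ρ / 2)),
      isOpen_Ioo.mem_nhds ht] with u hu huI
    have huI' : u ∈ Icc 0 t₀ := ⟨huI.1.le, huI.2.le⟩
    have key := coeff_transport (f := f) hρ hM hC1 hC hcβ hcM (hγne t ht.1) (hsm1 u huI').le
      (hsm1 t htI).le hu (hsumf u huI') (hsumf t htI) (hGsum _ (hsm1 u huI'))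
      (hGsum _ (hsm1 t htI))
    have h1 := hmne u huI.1
    have h2 := hmne t ht.1
    have h3 : m u = m t * ((γ u / γ t) ^ j * (starRingEnd ℂ (γ u / γ t)) ^ k) := by
      have h4 := hγne t ht.1
      have h5 : starRingEnd ℂ (γ t) ≠ 0 := (map_ne_zero _).2 h4
      simp only [m, map_div₀, div_pow]
      field_simp
    show G (γ u) / m u = G (γ t) / m t
    rw [div_eq_div_iff h1 h2, key, h3]
    ring
  have hqconst : ∀ t ∈ Ioo 0 t₀, q t = q (t₀ / 2) := by
    intro t ht
    have hd : ∀ t ∈ Ioo 0 t₀, HasDerivAt q 0 t := fun t ht =>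
      (hasDerivAt_const t (q t)).congr_of_eventuallyEq (hqloc t ht)
    exact isOpen_Ioo.is_const_of_deriv_eq_zero isPreconnected_Ioo
      (fun t ht => (hd t ht).differentiableAt.differentiableWithinAt)
      (fun t ht => (hd t ht).deriv) ht ⟨by linarith, by linarith⟩
  have hlim : Tendsto q (nhdsWithin 0 (Ioi 0)) (nhds (a j k)) := by
    have h1 := ((isBigO_partialSum hGev (j + k + 1)).comp_tendsto (tendsto_curve hO)).trans
      (hO.pow (j + k + 1))
    have h2 := (hα j k (j + k)).const_mul_left (a j k)
    have h3 : (fun t => G (γ t) - a j k * m t) =O[nhdsWithin 0 (Ioi 0)]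
        (fun t : ℝ => t ^ (j + k + 1)) := by
      refine (h1.sub h2).congr_left fun t => ?_
      simp only [Function.comp, β, m, mul_sub, Finset.mul_sum, mul_assoc]
      ring
    have h4 : (fun t : ℝ => t ^ (j + k)) =O[nhdsWithin 0 (Ioi 0)] m := by
      refine ((isBigO_id_curve hre).pow (j + k)).trans
        (IsBigO.of_bound 1 (Eventually.of_forall fun t => ?_))
      simp only [m, norm_mul, norm_pow, RCLike.norm_conj, pow_add, one_mul, le_refl]
    have h5 := ((h3.trans_isLittleO (isLittleO_pow_right (Nat.lt_succ_self _))).trans_isBigO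
      h4).tendsto_div_nhds_zero
    have h6 := h5.add_const (a j k)
    rw [zero_add] at h6
    refine h6.congr' ?_
    filter_upwards [self_mem_nhdsWithin] with t ht
    have := hmne t ht
    simp only [q]
    field_simp
    ring
  have hqa : q (t₀ / 2) = a j k := by
    refine tendsto_nhds_unique (Tendsto.congr' ?_ tendsto_const_nhds) hlim
    filter_upwards [Ioo_mem_nhdsGT ht₀] with t ht using (hqconst t ht).symm
  refine ⟨G, (hasFPowerSeriesAt_of_hasSum hGev).analyticAt, ?_⟩
  filter_upwards [Ioo_mem_nhdsGT ht₀] with t ht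
  have h1 := hqconst t ht
  rw [hqa] at h1
  exact (div_eq_iff (hmne t ht.1)).1 h1

/-! ### Analyticity of the curve -/

/-- If a monomial `a * γ ^ j * conj γ ^ k` with `a ≠ 0` and `k ≠ 0` coincides along the curve with a
holomorphic germ, then so does `conj γ` (extract a `k`-th root of `(conj γ / γ) ^ k`), hence so does
the parameter `t = (γ + conj γ) / 2`. Inverting this germ, whose derivative `1 / θ` is not `0`,
gives an analytic parametrization of the curve. -/
lemma exists_analytic_param {γ : ℝ → ℂ} (hre : ∀ t, (γ t).re = t)
    (hO : γ =O[nhdsWithin 0 (Ioi 0)] (fun t : ℝ => t)) {θ : ℂ} (hθ : θ.re = 1)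
    (hθlim : Tendsto (fun t : ℝ => γ t / t) (nhdsWithin 0 (Ioi 0)) (nhds θ))
    {G : ℂ → ℂ} (hG : AnalyticAt ℂ G 0) {a : ℂ} (ha : a ≠ 0) {j k : ℕ} (hk : k ≠ 0)
    (hGγ : ∀ᶠ t in nhdsWithin 0 (Ioi 0),
      G (γ t) = a * (γ t ^ j * (starRingEnd ℂ (γ t)) ^ k)) :
    ∃ L : ℂ → ℂ, AnalyticAt ℂ L 0 ∧ ∀ᶠ t in nhdsWithin (0 : ℝ) (Ioi 0), γ t = L t := by
  have hγne : ∀ t, 0 < t → γ t ≠ 0 := fun t ht h0 => by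
    have := hre t
    rw [h0, zero_re] at this
    exact ht.ne this
  have hpos : ∀ᶠ t in nhdsWithin (0 : ℝ) (Ioi 0), 0 < t := self_mem_nhdsWithin
  have hγt := tendsto_curve hO
  have hγt0 : Tendsto (fun t => ‖γ t‖) (nhdsWithin 0 (Ioi 0)) (nhds 0) := by
    simpa using hγt.norm
  have hk0 : (k : ℂ) ≠ 0 := Nat.cast_ne_zero.2 hk
  have hθ0 : θ ≠ 0 := fun h => by simp [h] at hθ
  have hcθ0 : starRingEnd ℂ θ ≠ 0 := (map_ne_zero _).2 hθ0
  obtain ⟨m, g, hg, hg0, hGg⟩ := hG.exists_eventuallyEq_pow_smul_nonzero_iff.2 (by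
    intro h
    obtain ⟨t, h1, h2, h3⟩ := ((hγt.eventually h).and (hGγ.and hpos)).exists
    rw [h1] at h2
    have h4 := hγne t h3
    have h5 : starRingEnd ℂ (γ t) ≠ 0 := (map_ne_zero _).2 h4
    exact mul_ne_zero ha (mul_ne_zero (pow_ne_zero _ h4) (pow_ne_zero _ h5)) h2.symm)
  have heq : ∀ᶠ t in nhdsWithin (0 : ℝ) (Ioi 0),
      γ t ^ m * g (γ t) = a * (γ t ^ j * (starRingEnd ℂ (γ t)) ^ k) := by
    filter_upwards [hγt.eventually hGg, hGγ] with t h1 h2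
    rw [← h2, h1, sub_zero, smul_eq_mul]
  have hgt : Tendsto (fun t => g (γ t)) (nhdsWithin 0 (Ioi 0)) (nhds (g 0)) :=
    hg.continuousAt.tendsto.comp hγt
  have hmod : ∀ᶠ t in nhdsWithin (0 : ℝ) (Ioi 0),
      ‖γ t‖ ^ m * ‖g (γ t)‖ = ‖a‖ * ‖γ t‖ ^ (j + k) := by
    filter_upwards [heq] with t ht
    have := congrArg norm ht
    simpa only [norm_mul, norm_pow, RCLike.norm_conj, pow_add] using this
  -- the order of vanishing of `G` is read off from the moduli
  obtain rfl : m = j + k := by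
    rcases lt_trichotomy m (j + k) with h | h | h
    · obtain ⟨d, hd⟩ := Nat.exists_eq_add_of_lt h
      have h1 : Tendsto (fun t => ‖a‖ * ‖γ t‖ ^ (d + 1)) (nhdsWithin 0 (Ioi 0)) (nhds 0) := by
        simpa using (hγt0.pow (d + 1)).const_mul ‖a‖
      have h2 : Tendsto (fun t => ‖g (γ t)‖) (nhdsWithin 0 (Ioi 0)) (nhds 0) := by
        refine h1.congr' ?_
        filter_upwards [hmod, hpos] with t ht htp
        have h3 : ‖γ t‖ ^ m ≠ 0 := pow_ne_zero _ (norm_ne_zero_iff.2 (hγne t htp))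
        apply mul_left_cancel₀ h3
        rw [ht, hd]
        ring
      exact absurd (tendsto_nhds_unique hgt.norm h2) (norm_ne_zero_iff.2 hg0)
    · exact h
    · obtain ⟨d, hd⟩ := Nat.exists_eq_add_of_lt h
      have h1 : Tendsto (fun t => ‖γ t‖ ^ (d + 1) * ‖g (γ t)‖) (nhdsWithin 0 (Ioi 0))
          (nhds 0) := by
        simpa using (hγt0.pow (d + 1)).mul hgt.norm
      have h2 : Tendsto (fun _ : ℝ => ‖a‖) (nhdsWithin 0 (Ioi 0)) (nhds 0) := by
        refine h1.congr' ?_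
        filter_upwards [hmod, hpos] with t ht htp
        have h3 : ‖γ t‖ ^ (j + k) ≠ 0 := pow_ne_zero _ (norm_ne_zero_iff.2 (hγne t htp))
        apply mul_left_cancel₀ h3
        rw [mul_comm _ ‖a‖, ← ht, hd]
        ring
      exact absurd (tendsto_nhds_unique tendsto_const_nhds h2) (norm_ne_zero_iff.2 ha)
  -- `ω` is the limit of `conj γ / γ`
  set ω := starRingEnd ℂ θ / θ with hω
  have hω0 : ω ≠ 0 := div_ne_zero hcθ0 hθ0
  have hv : Tendsto (fun t => starRingEnd ℂ (γ t) / γ t) (nhdsWithin 0 (Ioi 0)) (nhds ω) := by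
    have h1 := ((Complex.continuous_conj.tendsto θ).comp hθlim).div hθlim hθ0
    refine h1.congr' ?_
    filter_upwards [hpos] with t ht
    have h2 : (t : ℂ) ≠ 0 := ofReal_ne_zero.2 ht.ne'
    have h3 := hγne t ht
    simp only [Pi.div_apply, Function.comp_apply, map_div₀, conj_ofReal]
    field_simp
  have hvk : ∀ᶠ t in nhdsWithin (0 : ℝ) (Ioi 0),
      (starRingEnd ℂ (γ t) / γ t) ^ k = g (γ t) / a := by
    filter_upwards [heq, hpos] with t ht htp
    have h3 := hγne t htp
    rw [div_pow, div_eq_div_iff (pow_ne_zero _ h3) ha]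
    apply mul_left_cancel₀ (pow_ne_zero j h3)
    rw [pow_add] at ht
    linear_combination -ht
  have hωk : ω ^ k = g 0 / a :=
    tendsto_nhds_unique (hv.pow k) ((hgt.div_const a).congr' (hvk.mono fun t h => h.symm))
  have hu : Tendsto (fun t => starRingEnd ℂ (γ t) / γ t / ω) (nhdsWithin 0 (Ioi 0))
      (nhds 1) := by
    simpa [hω0] using hv.div_const ω
  -- near `0`, `k * log u` stays in the strip where it equals `log (u ^ k)`
  have hlogu : Tendsto (fun t => (k * log (starRingEnd ℂ (γ t) / γ t / ω)).im)
      (nhdsWithin 0 (Ioi 0)) (nhds 0) := by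
    have h1 := ((continuousAt_clog (by simp : (1 : ℂ) ∈ slitPlane)).tendsto.comp hu).const_mul
      (k : ℂ)
    have h2 := (Complex.continuous_im.tendsto _).comp h1
    simpa [Function.comp_def] using h2
  let w : ℂ → ℂ := fun z => ω * exp (log (g z / g 0) / k)
  have hw : AnalyticAt ℂ w 0 := by
    have h1 : AnalyticAt ℂ (fun z => g z / g 0) 0 := hg.div_const
    have h2 := h1.clog (by simp [hg0])
    exact analyticAt_const.mul h2.div_const.cexp
  have hw0 : w 0 = ω := by simp [w, hg0]
  have hconj : ∀ᶠ t in nhdsWithin (0 : ℝ) (Ioi 0), starRingEnd ℂ (γ t) = γ t * w (γ t) := by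
    filter_upwards [hvk, hpos, hlogu.eventually (Ioo_mem_nhds (neg_lt_zero.2 Real.pi_pos)
      Real.pi_pos)] with t h1 h2 h3
    have h4 := hγne t h2
    have h5 : starRingEnd ℂ (γ t) ≠ 0 := (map_ne_zero _).2 h4
    set u := starRingEnd ℂ (γ t) / γ t / ω with hu'
    have hu0 : u ≠ 0 := div_ne_zero (div_ne_zero h5 h4) hω0
    have h6 : u ^ k = g (γ t) / g 0 := by
      rw [hu', div_pow, h1, hωk]
      field_simp
    have h7 : log (g (γ t) / g 0) = k * log u := by
      rw [← h6, ← log_exp h3.1 h3.2.le, exp_nat_mul, exp_log hu0]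
    simp only [w]
    rw [h7, mul_div_cancel_left₀ _ hk0, exp_log hu0, hu']
    field_simp
  let K : ℂ → ℂ := fun z => z * ((1 + w z) / 2)
  have hKw : AnalyticAt ℂ (fun z => (1 + w z) / 2) 0 := (analyticAt_const.add hw).div_const
  have hK : AnalyticAt ℂ K 0 := analyticAt_id.mul hKw
  have hK0 : K 0 = 0 := by simp [K]
  have hKd : deriv K 0 ≠ 0 := by
    have h1 := (hasDerivAt_id (0 : ℂ)).mul hKw.differentiableAt.hasDerivAt
    have h2 : HasDerivAt K ((1 + ω) / 2) 0 := by
      refine h1.congr_deriv ?_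
      simp [hw0]
    rw [h2.deriv, hω]
    have h3 : θ + starRingEnd ℂ θ = 2 := by
      rw [add_conj, hθ]; norm_num
    have h4 : (1 + starRingEnd ℂ θ / θ) / 2 = 1 / θ := by
      field_simp
      exact h3
    rw [h4]
    exact one_div_ne_zero hθ0
  have hKγ : ∀ᶠ t in nhdsWithin (0 : ℝ) (Ioi 0), K (γ t) = t := by
    filter_upwards [hconj] with t ht
    have : K (γ t) = (γ t + γ t * w (γ t)) / 2 := by simp only [K]; ring
    rw [this, ← ht, add_conj, hre]
    push_cast
    ring
  have hL := hK.analyticAt_localInverse hKd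
  rw [hK0] at hL
  refine ⟨_, hL, ?_⟩
  filter_upwards [hKγ, hγt.eventually (hK.hasStrictDerivAt.eventually_left_inverse hKd)]
    with t h1 h2
  rw [h1] at h2
  exact h2.symm

lemma analyticOn_of_param {φ : ℝ → ℝ} {γ : ℝ → ℂ} (hγ : ∀ t, γ t = t + I * φ t) (hφ0 : φ 0 = 0)
    (hO : γ =O[nhdsWithin 0 (Ioi 0)] (fun t : ℝ => t)) {L : ℂ → ℂ} (hL : AnalyticAt ℂ L 0)
    (h : ∀ᶠ t in nhdsWithin (0 : ℝ) (Ioi 0), γ t = L t) :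
    ∃ l : ℝ, 0 < l ∧ AnalyticOn ℝ φ (Ico 0 l) := by
  have hof : Tendsto (fun t : ℝ => (t : ℂ)) (nhds 0) (nhds 0) := by
    simpa using (continuous_ofReal.tendsto (0 : ℝ))
  have hL0 : L 0 = 0 := by
    refine tendsto_nhds_unique (hL.continuousAt.tendsto.comp (hof.mono_left nhdsWithin_le_nhds))
      ((tendsto_curve hO).congr' ?_)
    filter_upwards [h] with t ht using ht
  have him : ∀ t, (γ t).im = φ t := fun t => by simp [hγ]
  have hev := hof.eventually hL.eventually_analyticAt
  obtain ⟨l₁, hl₁, h₁⟩ := Metric.eventually_nhds_iff.1 hev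
  obtain ⟨l₂, hl₂, h₂⟩ := Metric.mem_nhdsWithin_iff.1 h
  refine ⟨min l₁ l₂, lt_min hl₁ hl₂, ?_⟩
  have hA : AnalyticOn ℝ (fun t : ℝ => (L t).im) (Ico 0 (min l₁ l₂)) := by
    intro t ht
    have h3 : AnalyticAt ℂ L (t : ℂ) := h₁ (by
      rw [Real.dist_eq, sub_zero, abs_of_nonneg ht.1]
      exact ht.2.trans_le (min_le_left _ _))
    have h4 : AnalyticAt ℝ (fun t : ℝ => L (t : ℂ)) t :=
      AnalyticAt.comp (g := L) (f := fun t : ℝ => (t : ℂ)) (h3.restrictScalars (𝕜 := ℝ))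
        (ofRealCLM.analyticAt t)
    exact ((imCLM.analyticAt _).comp h4).analyticWithinAt
  refine hA.congr fun t ht => ?_
  rcases ht.1.eq_or_lt with h0 | h0
  · subst h0
    simp [hφ0, hL0]
  · have h5 := h₂ ⟨by
      rw [mem_ball_zero_iff, Real.norm_eq_abs, abs_of_nonneg ht.1]
      exact ht.2.trans_le (min_le_right _ _), h0⟩
    rw [← him, show γ t = L t from h5]

/-! ### Holomorphy of `f` -/

/-- The filter `nhdsWithin 0 s` contains the point `0` itself, so `o(1)` forces the value `0`. -/
lemma zero_of_isLittleO {g : ℝ → ℂ} {s : Set ℝ} (h0 : (0 : ℝ) ∈ s)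
    (h : g =o[nhdsWithin 0 s] fun _ => (1 : ℝ)) : g 0 = 0 := by
  have h1 := (isLittleO_one_iff ℝ).1 h
  exact tendsto_nhds_unique (tendsto_pure_nhds g 0) (h1.mono_left (pure_le_nhdsWithin h0))

/-- The curve `t + i φ(t)` has a tangent direction at `0`, with real part `1`. -/
lemma curve_tangent {φ : ℝ → ℝ} {h : ℕ → ℂ} (hT : HasTaylorSeries1At φ h) (hφ0 : φ 0 = 0)
    {γ : ℝ → ℂ} (hγ : ∀ t, γ t = t + I * φ t) :
    h 0 = 0 ∧ (1 + I * h 1).re = 1 ∧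
      Tendsto (fun t : ℝ => γ t / t) (nhdsWithin 0 (Ioi 0)) (nhds (1 + I * h 1)) := by
  have hh0 : h 0 = 0 := by
    have h1 := zero_of_isLittleO (mem_Ici.2 le_rfl) (by simpa using hT 0)
    simpa [hφ0] using h1
  have h1 := (hT 1).mono (nhdsWithin_mono 0 Ioi_subset_Ici_self)
  have hne : ∀ᶠ t in nhdsWithin (0 : ℝ) (Ioi 0), 0 < t := self_mem_nhdsWithin
  have h2 : (fun t : ℝ => (φ t : ℂ) - h 1 * t) =o[nhdsWithin 0 (Ioi 0)]
      (fun t : ℝ => (t : ℂ)) := by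
    refine (h1.trans_isBigO (IsBigO.of_bound 1 (Eventually.of_forall fun t => ?_))).congr_left
      fun t => ?_
    · simp
    · simp [Finset.sum_range_succ, hh0]
  have h3 : Tendsto (fun t : ℝ => (φ t : ℂ) / t) (nhdsWithin 0 (Ioi 0)) (nhds (h 1)) := by
    have h4 := h2.tendsto_div_nhds_zero.add_const (h 1)
    rw [zero_add] at h4
    refine h4.congr' ?_
    filter_upwards [hne] with t ht
    have : (t : ℂ) ≠ 0 := ofReal_ne_zero.2 ht.ne'
    field_simp
    ring
  have him : (h 1).im = 0 := by
    refine tendsto_nhds_unique ((Complex.continuous_im.tendsto _).comp h3) ?_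
    refine tendsto_const_nhds.congr fun t => ?_
    simp only [Function.comp]
    rw [← ofReal_div, ofReal_im]
  refine ⟨hh0, by simp [him], ?_⟩
  refine ((h3.const_mul I).const_add 1).congr' ?_
  filter_upwards [hne] with t ht
  have : (t : ℂ) ≠ 0 := ofReal_ne_zero.2 ht.ne'
  rw [hγ]
  field_simp

lemma sum_tri_of_zero {g : ℕ × ℕ → ℂ} (hg : ∀ j k, k ≠ 0 → g (j, k) = 0) (N : ℕ) :
    ∑ p ∈ tri N, g p = ∑ n ∈ Finset.range (N + 1), g (n, 0) := by
  symm
  refine Finset.sum_of_injOn (fun n => (n, 0)) (fun _ _ _ _ h => congrArg Prod.fst h) ?_ ?_ ?_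
  · intro n hn
    have : n < N + 1 := by simpa using hn
    exact mem_tri.2 (by simpa using Nat.lt_succ_iff.1 this)
  · rintro ⟨j, k⟩ hp hn
    refine hg j k fun h => hn ⟨j, ?_, by rw [h]⟩
    have := mem_tri.1 hp
    simp only [Finset.coe_range, mem_Iio]
    simp only at this
    omega
  · intro n _
    rfl

/-- Once the series contains no `conj z`, all the continuations of `f` along the curves `s * γ` come
from one germ, and moving `s` gives a holomorphic extension to a neighbourhood. -/
lemma differentiableAt_of_pure {f : ℂ → ℂ} {a : ℕ → ℕ → ℂ} (hf : HasTaylorSeries2At f a)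
    (ha : ∀ j k, k ≠ 0 → a j k = 0) {γ : ℝ → ℂ}
    (hre : ∀ t, (γ t).re = t) (hO : γ =O[nhdsWithin 0 (Ioi 0)] (fun t : ℝ => t))
    {b : ℝ} (hγc : ContinuousOn γ (Icc 0 b)) (hγ0 : γ 0 = 0)
    {Ω : Set ℂ} (hΩ : IsOpen Ω) (h0Ω : (0 : ℂ) ∈ Ω) {E : Set ℂ} (hE : IsOpen E)
    (hE0 : (0 : ℂ) ∉ E)
    (hext : ∀ s ∈ E, ∃ U F, IsOpen U ∧ DifferentiableOn ℂ F U ∧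
      ∀ t, 0 ≤ t → t < b → s * γ t ∈ Ω → γ t ∈ U ∧ f (s * γ t) = F (γ t))
    {s : ℂ} (hs : s ∈ E) {t₁ : ℝ} (ht₁ : 0 < t₁) (ht₁b : t₁ < b)
    (hsΩ : ∀ t ∈ Icc 0 t₁, s * γ t ∈ Ω) : DifferentiableAt ℂ f (s * γ t₁) := by
  have hb : 0 < b := ht₁.trans ht₁b
  have hloc : ∀ s ∈ E, ∃ U F, IsOpen U ∧ DifferentiableOn ℂ F U ∧
      (∀ t, 0 ≤ t → t < b → s * γ t ∈ Ω → γ t ∈ U ∧ f (s * γ t) = F (γ t)) ∧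
      (∀ᶠ z in nhds (0 : ℂ), HasSum (fun n => a n 0 * s ^ n * z ^ n) (F z)) := by
    intro s hs
    obtain ⟨U, F, hU, hF, h⟩ := hext s hs
    have h0U : (0 : ℂ) ∈ U := by
      have := (h 0 le_rfl hb (by rw [hγ0, mul_zero]; exact h0Ω)).1
      rwa [hγ0] at this
    have hev : ∀ᶠ t in nhdsWithin (0 : ℝ) (Ioi 0), f (s * γ t) = F (γ t) := by
      have h1 : Tendsto (fun t => s * γ t) (nhdsWithin 0 (Ioi 0)) (nhds 0) := by
        simpa using (tendsto_curve hO).const_mul s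
      filter_upwards [h1.eventually (hΩ.mem_nhds h0Ω), Ioo_mem_nhdsGT hb] with t ht htb
      exact (h t htb.1.le htb.2 ht).2
    obtain ⟨c, hc, hu⟩ := curve_coeffs hre hO (hF.analyticAt (hU.mem_nhds h0U)) hev
    have hcc : ∀ n, c n = a n 0 * s ^ n := fun n => by
      refine hu n (fun n => a n 0 * s ^ n) ?_ n le_rfl
      refine (taylor_curve hf hO s n).congr_left fun t => ?_
      rw [sum_tri_of_zero (fun j k hk => by simp only [ha j k hk, zero_mul])]
      simp
    simp only [hcc] at hc
    exact ⟨U, F, hU, hF, h, hc⟩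
  obtain ⟨U, F, hU, hF, h, hsum⟩ := hloc s hs
  have hs0 : s ≠ 0 := fun h => hE0 (h ▸ hs)
  have hγ₁ : γ t₁ ≠ 0 := fun h0 => by
    have := hre t₁
    rw [h0, zero_re] at this
    exact ht₁.ne this
  have hγc' : ContinuousOn γ (Icc 0 t₁) := hγc.mono (Icc_subset_Icc_right ht₁b.le)
  let V : Set ℂ := (fun w => w / s) ⁻¹' U
  have hV : IsOpen V := hU.preimage (continuous_id.div_const s)
  -- the arc is compact, so nearby values `s'` keep it inside `Ω` and inside the domain of `F (· / s)`
  have hnear : ∀ᶠ s' in nhds s, ∀ z ∈ γ '' Icc 0 t₁, s' * z ∈ Ω ∩ V := by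
    refine (isCompact_Icc.image_of_continuousOn hγc').eventually_forall_of_forall_eventually ?_
    rintro _ ⟨t, ht, rfl⟩
    have h1 : Tendsto (fun q : ℂ × ℂ => q.1 * q.2) (nhds (s, γ t)) (nhds (s * γ t)) :=
      (continuous_mul.tendsto (s, γ t))
    refine h1.eventually ((hΩ.inter hV).mem_nhds ⟨hsΩ t ht, ?_⟩)
    show s * γ t / s ∈ U
    rw [mul_div_cancel_left₀ _ hs0]
    exact (h t ht.1 (ht.2.trans_lt ht₁b) (hsΩ t ht)).1
  -- `F'` and `z ↦ F (s' * z / s)` have the same Taylor series at `0`, hence agree along the arc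
  have heq : ∀ᶠ s' in nhds s, f (s' * γ t₁) = F (s' * γ t₁ / s) := by
    filter_upwards [hnear, hE.mem_nhds hs] with s' h1 hs'
    obtain ⟨U', F', hU', hF', h', hsum'⟩ := hloc s' hs'
    have h2 := fun t (ht : t ∈ Icc 0 t₁) => h' t ht.1 (ht.2.trans_lt ht₁b)
      (h1 _ (mem_image_of_mem γ ht)).1
    have hmem : t₁ ∈ Icc 0 t₁ := right_mem_Icc.2 ht₁.le
    rw [(h2 t₁ hmem).2]
    refine propagate ht₁.le hγc' (V := (fun z => s' * z / s) ⁻¹' U)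
      (G := fun z => F (s' * z / s)) hU' ?_ hF' ?_ (fun t ht => (h2 t ht).1)
      (fun t ht => (h1 _ (mem_image_of_mem γ ht)).2) ?_ t₁ hmem
    · exact hU.preimage (by fun_prop)
    · exact hF.comp (by fun_prop) (fun z hz => hz)
    · rw [hγ0]
      have h3 : Tendsto (fun z : ℂ => s' * z / s) (nhds 0) (nhds 0) := by
        have : Continuous fun z : ℂ => s' * z / s := by fun_prop
        simpa using this.tendsto 0
      filter_upwards [hsum', h3.eventually hsum] with z h4 h5
      refine h4.unique (h5.congr_fun ?_)
      intro n
      rw [div_pow, mul_pow]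
      field_simp
  have hfin : f =ᶠ[nhds (s * γ t₁)] fun p => F (p / s) := by
    have h1 : Tendsto (fun p => p / γ t₁) (nhds (s * γ t₁)) (nhds s) := by
      have : Continuous fun p : ℂ => p / γ t₁ := by fun_prop
      simpa [hγ₁] using this.tendsto (s * γ t₁)
    filter_upwards [h1.eventually heq] with p hp
    rwa [div_mul_cancel₀ _ hγ₁] at hp
  refine DifferentiableAt.congr_of_eventuallyEq ?_ hfin
  have h2 : DifferentiableAt ℂ F (s * γ t₁ / s) := by
    rw [mul_div_cancel_left₀ _ hs0]
    exact hF.differentiableAt (hU.mem_nhds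
      (h t₁ ht₁.le ht₁b (hsΩ t₁ (right_mem_Icc.2 ht₁.le))).1)
  exact DifferentiableAt.comp (g := F) (f := fun p => p / s) _ h2 (by fun_prop)

lemma differentiableAt_zero_of_pure {f : ℂ → ℂ} {a : ℕ → ℕ → ℂ} (hf : HasTaylorSeries2At f a)
    (ha : ∀ j k, k ≠ 0 → a j k = 0) : DifferentiableAt ℂ f 0 := by
  have hs : ∀ n (z : ℂ), ∑ p ∈ tri n, a p.1 p.2 * z ^ p.1 * (starRingEnd ℂ z) ^ p.2 =
      ∑ m ∈ Finset.range (n + 1), a m 0 * z ^ m := fun n z => by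
    rw [sum_tri_of_zero (fun j k hk => by simp only [ha j k hk, zero_mul])]
    simp
  have h0 : f 0 = a 0 0 := by
    have h1 := (hf 0)
    simp only [hs, pow_zero] at h1
    have h2 := (isLittleO_one_iff ℝ).1 h1
    have h3 := tendsto_nhds_unique (tendsto_pure_nhds _ (0 : ℂ)) (h2.mono_left (pure_le_nhds 0))
    simpa [sub_eq_zero] using h3
  have h1 := hf 1
  simp only [hs, Finset.sum_range_succ, Finset.sum_range_zero, pow_zero, pow_one, mul_one,
    zero_add] at h1
  have : HasDerivAt f (a 1 0) 0 := by
    rw [hasDerivAt_iff_isLittleO_nhds_zero]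
    refine h1.of_norm_right.congr_left fun z => ?_
    rw [zero_add, h0, smul_eq_mul]
    ring
  exact this.differentiableAt

/-- Points of the component of `s * Γ ∩ Ω` containing `0` are reached along the curve without
leaving `Ω`. -/
lemma component_arc {γ : ℝ → ℂ} (hre : ∀ t, (γ t).re = t) (hγ0 : γ 0 = 0) {b : ℝ} (hb : 0 < b)
    {Ω : Set ℂ} (h0Ω : (0 : ℂ) ∈ Ω) {s p : ℂ}
    (hp : p ∈ connectedComponentIn ((fun z => s * z) '' (γ '' Ico 0 b) ∩ Ω) 0) (hp0 : p ≠ 0) :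
    s ≠ 0 ∧ ∃ t₁, 0 < t₁ ∧ t₁ < b ∧ p = s * γ t₁ ∧ ∀ t ∈ Icc 0 t₁, s * γ t ∈ Ω := by
  have hsub := connectedComponentIn_subset ((fun z => s * z) '' (γ '' Ico 0 b) ∩ Ω) 0
  obtain ⟨⟨_, ⟨t₁, ht₁, rfl⟩, rfl⟩, -⟩ := hsub hp
  simp only at hp hp0 ⊢
  have hs : s ≠ 0 := left_ne_zero_of_mul hp0
  have ht0 : 0 < t₁ := ht₁.1.lt_of_ne fun h => hp0 (by rw [← h, hγ0, mul_zero])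
  refine ⟨hs, t₁, ht0, ht₁.2, rfl, fun t ht => ?_⟩
  have h0 : (0 : ℂ) ∈ connectedComponentIn ((fun z => s * z) '' (γ '' Ico 0 b) ∩ Ω) 0 :=
    mem_connectedComponentIn ⟨⟨0, ⟨0, ⟨le_rfl, hb⟩, hγ0⟩, mul_zero s⟩, h0Ω⟩
  have hc : IsPreconnected ((fun z : ℂ => (z / s).re) ''
      connectedComponentIn ((fun z => s * z) '' (γ '' Ico 0 b) ∩ Ω) 0) :=
    isPreconnected_connectedComponentIn.image _
      (Complex.continuous_re.comp (continuous_id.div_const s)).continuousOn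
  -- `z ↦ re (z / s)` recovers the parameter, and maps the component onto a set containing `[0, t₁]`
  have h1 := hc.Icc_subset (a := 0) (b := t₁) ⟨0, h0, by simp⟩
    ⟨s * γ t₁, hp, by simp only [mul_div_cancel_left₀ _ hs, hre]⟩ ht
  obtain ⟨w, hw, hwt⟩ := h1
  obtain ⟨⟨_, ⟨u, hu, rfl⟩, rfl⟩, hwΩ⟩ := hsub hw
  simp only [mul_div_cancel_left₀ _ hs, hre] at hwt
  rw [← hwt]
  exact hwΩ

theorem stmt10 (Ω : Set ℂ) (hΩ : IsOpen Ω) (hΩc : IsConnected Ω) (h0Ω : (0 : ℂ) ∈ Ω)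
    (f : ℂ → ℂ) (hf : ContinuousOn f Ω)
    (b : ℝ) (hb : 0 < b) (φ : ℝ → ℝ)
    (hφc : ContinuousOn φ (Set.Icc 0 b)) (hφ0 : φ 0 = 0)
    (Γ : Set ℂ) (hΓ : Γ = {w : ℂ | ∃ t : ℝ, 0 ≤ t ∧ t < b ∧ w = ↑t + Complex.I * ↑(φ t)})
    (E : Set ℂ) (hE : IsOpen E) (hEc : IsConnected E)
    (hfT : ∃ a : ℕ → ℕ → ℂ, HasTaylorSeries2At f a)
    (hφT : ∃ h : ℕ → ℂ, HasTaylorSeries1At φ h)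
    (hna : ¬ ∃ l : ℝ, 0 < l ∧ AnalyticOn ℝ φ (Set.Ico 0 l))
    (hext : ∀ s ∈ E, s ≠ 0 → ∃ U F, IsOpen U ∧
      ((fun z => s⁻¹ * z) '' Ω) ∩ Γ ⊆ U ∧ DifferentiableOn ℂ F U ∧
      ∀ z ∈ ((fun z => s⁻¹ * z) '' Ω) ∩ Γ, f (s * z) = F z) :
    DifferentiableOn ℂ f
      (⋃ s ∈ E, connectedComponentIn ((fun z => s * z) '' Γ ∩ Ω) 0) := by
  obtain ⟨a, ha⟩ := hfT
  obtain ⟨h, hT⟩ := hφT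
  set γ : ℝ → ℂ := fun t => t + I * φ t with hγdef
  have hγ : ∀ t, γ t = t + I * φ t := fun t => rfl
  have hre : ∀ t, (γ t).re = t := fun t => by simp [hγ]
  have hγ0 : γ 0 = 0 := by simp [hγ, hφ0]
  have hγc : ContinuousOn γ (Icc 0 b) :=
    (continuous_ofReal.continuousOn).add
      (continuousOn_const.mul (continuous_ofReal.comp_continuousOn hφc))
  have hΓγ : Γ = γ '' Ico 0 b := by
    rw [hΓ]
    ext w
    constructor
    · rintro ⟨t, h1, h2, rfl⟩
      exact ⟨t, ⟨h1, h2⟩, rfl⟩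
    · rintro ⟨t, ⟨h1, h2⟩, rfl⟩
      exact ⟨t, h1, h2, rfl⟩
  obtain ⟨hh0, hθ, hθlim⟩ := curve_tangent hT hφ0 hγ
  have hθ0 : 1 + I * h 1 ≠ 0 := fun h => by rw [h] at hθ; simp at hθ
  have hO : γ =O[nhdsWithin 0 (Ioi 0)] (fun t : ℝ => t) := by
    have h1 : γ =O[nhdsWithin 0 (Ioi 0)] (fun t : ℝ => (t : ℂ)) := by
      refine isBigO_of_div_tendsto_nhds ?_ _ hθlim
      filter_upwards [self_mem_nhdsWithin] with t ht h0
      exact absurd (ofReal_eq_zero.1 h0) (ne_of_gt ht)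
    exact h1.trans (IsBigO.of_bound 1 (Eventually.of_forall fun t => by simp))
  obtain ⟨α, hα⟩ := exists_expansion hT hh0 hθ0 hγ hO
  have hE' : IsOpen (E ∩ {0}ᶜ) := hE.inter isOpen_compl_singleton
  have hne : (E ∩ {0}ᶜ).Nonempty :=
    (dense_compl_singleton (0 : ℂ)).inter_open_nonempty E hE hEc.nonempty
  have hext' : ∀ s ∈ E ∩ {0}ᶜ, ∃ U F, IsOpen U ∧ DifferentiableOn ℂ F U ∧
      ∀ t, 0 ≤ t → t < b → s * γ t ∈ Ω → γ t ∈ U ∧ f (s * γ t) = F (γ t) := by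
    rintro s ⟨hs, hs0⟩
    obtain ⟨U, F, hU, hUsub, hF, hfF⟩ := hext s hs hs0
    refine ⟨U, F, hU, hF, fun t h1 h2 h3 => ?_⟩
    have hmem : γ t ∈ ((fun z => s⁻¹ * z) '' Ω) ∩ Γ :=
      ⟨⟨_, h3, inv_mul_cancel_left₀ hs0 _⟩, hΓγ ▸ ⟨t, ⟨h1, h2⟩, rfl⟩⟩
    exact ⟨hUsub hmem, hfF _ hmem⟩
  -- a term containing `conj z` would make `φ` analytic
  have ha0 : ∀ j k, k ≠ 0 → a j k = 0 := by
    intro j k hk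
    by_contra hjk
    obtain ⟨G, hG, hGγ⟩ := monomial_germ ha hre hO hα hb hγc hγ0 hΩ h0Ω hE' hne hext' j k
    obtain ⟨L, hL, hLγ⟩ := exists_analytic_param hre hO hθ hθlim hG hjk hk hGγ
    exact hna (analyticOn_of_param hγ hφ0 hO hL hLγ)
  intro p hp
  simp only [mem_iUnion] at hp
  obtain ⟨s, hs, hp⟩ := hp
  refine DifferentiableAt.differentiableWithinAt ?_
  by_cases hp0 : p = 0
  · rw [hp0]
    exact differentiableAt_zero_of_pure ha ha0
  · rw [hΓγ] at hp
    obtain ⟨hs0, t₁, ht₁, ht₁b, rfl, hsΩ⟩ := component_arc hre hγ0 hb h0Ω hp hp0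
    exact differentiableAt_of_pure ha ha0 hre hO hγc hγ0 hΩ h0Ω hE' (fun h => h.2 rfl) hext'
      ⟨hs, hs0⟩ ht₁ ht₁b hsΩ
end

section
/- Let φ : [0, b] → ℝ be continuous with φ(0) = 0, having a Taylor series at 0, and such that φ is real analytic on [0, λ) for no λ > 0. Let S = {t + iφ(t) : 0 ≤ t ≤ b}, and let 𝕌 be a nonempty open subset of ℂ \ {0}. Then S has the Hartogs property with respect to the maps z ↦ uz + c (u ∈ 𝕌, c ∈ ℂ): for every domain Ω ⊆ ℂ and every C^∞ function f : Ω → ℂ such that for each u ∈ 𝕌 and c ∈ ℂ the restriction of f to (uS + c) ∩ Ω extends holomorphically to an open neighborhood of (uS + c) ∩ Ω, the function f is holomorphic on Ω. -/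
/-!
Write `ζ t = t + i φ t` and `α = 1 + i φ'(0) ≠ 0`, so that `ζ t ~ α t` as `t → 0⁺`. By continuity of
the derivative, it is enough to find a point of complex differentiability of `f` in every nonempty
open subset of `Ω`.

For each `u ∈ U` and `c ∈ Ω`, the holomorphic extension gives a power series expansion
`f (c + u ζ t) = ∑ A_m (ζ t)ᵐ` for small `t ≥ 0`. A Baire category argument
(`exists_uniform_expansion`) yields small balls of parameters `u` and `c` on which
`‖A_m‖ ≤ N ^ (m + 1)` and the expansion holds on a common interval. Now take a mixed difference of
order `n` in `u`. On the left, since `f` is smooth, it is `tⁿ Dⁿ f (c) (x₁ α, …, xₙ α) + o(tⁿ)`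
as `t → 0⁺`; on the right it is the power series in `ζ t` with coefficients the mixed
differences of `A_m`, and comparing orders in `t`, the one with `m = n` is therefore
`Dⁿ f (c) (x₁, …, xₙ)` up to powers of `α` (which cancel in norm). This bounds `‖Dⁿ f (c)‖` by
`C Kⁿ n!` with constants uniform in `c` (`norm_iteratedFDeriv_le`), hence `f` is real analytic at
the centre of the ball (`analyticAt_of_iteratedFDeriv_bound`).

At such a point `c`, let `F` be the holomorphic extension along the curve `c + u ζ t`. In the
coordinates `c + u (t + i s)`, the real analytic function `f - F` vanishes on the graph of `φ`. If
its differential at `c` were nonzero, the implicit function theorem would make `φ` real analytic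
near `0`, against the hypothesis. So `Df(c) = DF(c)` is complex linear
(`differentiableAt_of_analyticAt`).
-/

open Complex Filter Asymptotics Set

/-- `f` restricted to `T` extends holomorphically to an open neighborhood of `T`. -/
def ExtendsHolomorphicallyOn (f : ℂ → ℂ) (T : Set ℂ) : Prop :=
  ∃ U F, IsOpen U ∧ T ⊆ U ∧ DifferentiableOn ℂ F U ∧ Set.EqOn f F T

namespace Hartogs

/-! ### Real analyticity from derivative bounds -/

/-- Cauchy-type bounds on all derivatives, uniform on a ball, force real analyticity: they make
the Taylor series at `c` converge geometrically and its Lagrange remainder along each short segment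
`c + s y`, `s ∈ [0, 1]`, tend to `0`. -/
theorem analyticAt_of_iteratedFDeriv_bound {f : ℂ → ℂ} {c : ℂ} {ρ C K : ℝ} (hρ : 0 < ρ)
    (hK : 0 < K)
    (hf : ContDiffOn ℝ (⊤ : ℕ∞) f (Metric.ball c ρ))
    (hb : ∀ n : ℕ, ∀ x ∈ Metric.ball c ρ,
      ‖iteratedFDeriv ℝ n f x‖ ≤ C * K ^ n * (n.factorial : ℝ)) :
    AnalyticAt ℝ f c := by
  have hC : 0 ≤ C := by
    have := hb 0 c (Metric.mem_ball_self hρ)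
    simp only [pow_zero, mul_one, Nat.factorial_zero, Nat.cast_one] at this
    exact (norm_nonneg _).trans this
  set p : FormalMultilinearSeries ℝ ℂ ℂ :=
    fun n => ((n.factorial : ℝ)⁻¹) • iteratedFDeriv ℝ n f c with hp
  have hpn : ∀ n, ‖p n‖ ≤ C * K ^ n := by
    intro n
    have h1 := hb n c (Metric.mem_ball_self hρ)
    have h2 : (0 : ℝ) < n.factorial := by positivity
    simp only [hp, norm_smul, norm_inv, RCLike.norm_natCast]
    rw [inv_mul_le_iff₀ h2]
    linarith
  -- inside radius `1 / (2 K)` Taylor terms are `O(2⁻ⁿ)` and remainders `O(n 2⁻ⁿ)`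
  set r : ℝ := min ρ (1 / (2 * K)) with hr
  have hr0 : 0 < r := by positivity
  have hrK : K * r ≤ 1 / 2 := by
    have : r ≤ 1 / (2 * K) := min_le_right _ _
    calc K * r ≤ K * (1 / (2 * K)) := by gcongr
      _ = 1 / 2 := by field_simp
  have hball : HasFPowerSeriesOnBall f p c (ENNReal.ofReal r) := by
    refine ⟨?_, by simpa using hr0, ?_⟩
    · have : ENNReal.ofReal r = ((NNReal.mk r hr0.le : NNReal) : ENNReal) := by
        rw [ENNReal.ofReal, Real.toNNReal_of_nonneg hr0.le]
      rw [this]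
      refine p.le_radius_of_bound C fun n => ?_
      calc ‖p n‖ * r ^ n ≤ C * K ^ n * r ^ n := by gcongr; exact hpn n
        _ = C * (K * r) ^ n := by ring
        _ ≤ C * 1 ^ n := by gcongr; linarith
        _ = C := by simp
    · intro y hy
      have hy' : ‖y‖ < r := by
        simpa [Metric.eball_ofReal] using hy
      have hKy : K * ‖y‖ ≤ 1 / 2 := by
        refine le_trans ?_ hrK; gcongr
      have hbd : ∀ n, ‖p n fun _ => y‖ ≤ C * (1 / 2) ^ n := by
        intro n
        calc ‖p n fun _ => y‖ ≤ ‖p n‖ * ‖y‖ ^ n := by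
              simpa using (p n).le_opNorm (fun _ => y)
          _ ≤ C * K ^ n * ‖y‖ ^ n := by gcongr; exact hpn n
          _ = C * (K * ‖y‖) ^ n := by ring
          _ ≤ _ := by gcongr
      have hgeo : Summable fun n : ℕ => C * (1 / 2 : ℝ) ^ n :=
        (summable_geometric_of_lt_one (by norm_num) (by norm_num)).mul_left C
      have hsn : Summable fun n => ‖p n fun _ => y‖ :=
        Summable.of_nonneg_of_le (fun _ => norm_nonneg _) hbd hgeo
      rw [hasSum_iff_tendsto_nat_of_summable_norm hsn, ← tendsto_add_atTop_iff_nat 1]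
      -- the segment from `c` to `c + y`, parametrised by `[0, 1]`
      set ℓ : ℝ →L[ℝ] ℂ := ContinuousLinearMap.smulRight (1 : ℝ →L[ℝ] ℝ) y with hℓ
      have hfa : ∀ s ∈ Icc (0 : ℝ) 1, c + ℓ s ∈ Metric.ball c ρ := by
        intro s hs
        have : ‖s • y‖ < ρ := by
          rw [norm_smul, Real.norm_eq_abs, abs_of_nonneg hs.1]
          calc s * ‖y‖ ≤ 1 * ‖y‖ := by gcongr; exact hs.2
            _ < ρ := by rw [one_mul]; exact hy'.trans_le (min_le_left _ _)
        simpa [hℓ] using this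
      have hfc : ∀ x ∈ Metric.ball c ρ, ContDiffAt ℝ (⊤ : ℕ∞) f x :=
        fun x hx => hf.contDiffAt (Metric.isOpen_ball.mem_nhds hx)
      set g : ℝ → ℂ := fun s => f (c + ℓ s) with hg
      have hgc : ∀ s ∈ Icc (0 : ℝ) 1, ContDiffAt ℝ (⊤ : ℕ∞) g s := by
        intro s hs
        have h1 := hfc _ (hfa s hs)
        have h2 : ContDiffAt ℝ (⊤ : ℕ∞) (fun s : ℝ => c + ℓ s) s := by fun_prop
        exact ContDiffAt.comp s h1 h2
      have hder : ∀ n : ℕ, ∀ s ∈ Icc (0 : ℝ) 1, iteratedDerivWithin n g (Icc 0 1) s =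
          iteratedFDeriv ℝ n f (c + ℓ s) fun _ => y := by
        intro n s hs
        rw [iteratedDerivWithin_eq_iteratedDeriv (uniqueDiffOn_Icc (by norm_num))
          ((hgc s hs).of_le (by exact_mod_cast le_top)) hs, iteratedDeriv_eq_iteratedFDeriv]
        have hO : IsOpen (Metric.ball (0 : ℂ) ρ) := Metric.isOpen_ball
        have hO' : IsOpen (ℓ ⁻¹' Metric.ball (0 : ℂ) ρ) := hO.preimage ℓ.continuous
        have hs0 : ℓ s ∈ Metric.ball (0 : ℂ) ρ := by simpa using hfa s hs
        have hF : ContDiffOn ℝ n (fun z => f (c + z)) (Metric.ball (0 : ℂ) ρ) := by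
          intro z hz
          have h1 := (hfc (c + z) (by simpa using hz)).of_le
            (show ((n : ℕ∞) : WithTop ℕ∞) ≤ ((⊤ : ℕ∞) : WithTop ℕ∞) by exact_mod_cast le_top)
          have h2 : ContDiffAt ℝ n (fun z : ℂ => c + z) z := by fun_prop
          exact (ContDiffAt.comp z h1 h2).contDiffWithinAt
        have h3 := ℓ.iteratedFDerivWithin_comp_right hF hO.uniqueDiffOn hO'.uniqueDiffOn hs0
          (i := n) le_rfl
        rw [iteratedFDerivWithin_of_isOpen _ hO' hs0, iteratedFDerivWithin_of_isOpen _ hO hs0,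
          iteratedFDeriv_comp_add_left] at h3
        have h4 : ((fun z => f (c + z)) ∘ ℓ) = g := rfl
        rw [h4] at h3
        rw [h3]
        simp [ContinuousMultilinearMap.compContinuousLinearMap_apply, hℓ]
      have hrem : ∀ n : ℕ, ‖f (c + y) - ∑ i ∈ Finset.range (n + 1), p i fun _ => y‖ ≤
          C * ((n + 1 : ℕ) * (1 / 2 : ℝ) ^ (n + 1)) := by
        intro n
        have h1 := taylor_mean_remainder_bound (f := g) (a := 0) (b := 1) (x := 1) (n := n)
          (C := C * K ^ (n + 1) * ((n + 1).factorial : ℝ) * ‖y‖ ^ (n + 1)) zero_le_one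
          (fun s hs => ((hgc s hs).of_le
            (by exact_mod_cast le_top)).contDiffWithinAt) (by simp) (by
            intro s hs
            rw [hder _ s hs]
            refine (ContinuousMultilinearMap.le_opNorm _ _).trans ?_
            simp only [Finset.prod_const, Finset.card_univ, Fintype.card_fin]
            gcongr
            exact hb _ _ (hfa s hs))
        have h2 : g 1 = f (c + y) := by simp [hg, hℓ]
        have h3 : taylorWithinEval g n (Icc 0 1) 0 1 =
            ∑ i ∈ Finset.range (n + 1), p i fun _ => y := by
          rw [taylor_within_apply]
          refine Finset.sum_congr rfl fun i _ => ?_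
          rw [hder i 0 (by simp)]
          simp [hp]
        rw [h2, h3] at h1
        refine h1.trans ?_
        have h5 : ((n.factorial : ℕ) : ℝ) ≠ 0 := by positivity
        have h4 : C * K ^ (n + 1) * ((n + 1).factorial : ℝ) * ‖y‖ ^ (n + 1) *
            (1 - 0) ^ (n + 1) / (n.factorial : ℝ) = C * ((n + 1 : ℕ) * (K * ‖y‖) ^ (n + 1)) := by
          rw [Nat.factorial_succ]; push_cast; field_simp; ring
        rw [h4]
        gcongr
      have hlim : Tendsto (fun n : ℕ => C * (((n + 1 : ℕ) : ℝ) * (1 / 2 : ℝ) ^ (n + 1)))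
          atTop (nhds 0) := by
        have h1 := tendsto_self_mul_const_pow_of_lt_one (r := (1 / 2 : ℝ)) (by norm_num)
          (by norm_num)
        have h2 := ((tendsto_add_atTop_iff_nat 1).2 h1).const_mul C
        simpa using h2
      rw [tendsto_iff_norm_sub_tendsto_zero]
      refine squeeze_zero (fun _ => norm_nonneg _) (fun n => ?_) hlim
      rw [norm_sub_rev]
      exact hrem n
  exact hball.analyticAt

/-! ### Mixed finite differences -/

/-- The iterated forward difference `Δ_{y₁} ⋯ Δ_{yₙ} g` at `p`, where
`Δ_y g p = g (p + y) - g p`. It makes sense for any map of additive groups, in particular for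
derivatives and for coefficient sequences. -/
def mixedDiff {E F : Type} [AddCommGroup E] [AddCommGroup F] :
    (n : ℕ) → (Fin n → E) → (E → F) → E → F
  | 0, _, g, p => g p
  | n + 1, y, g, p =>
      mixedDiff n (Fin.init y) g (p + y (Fin.last n)) - mixedDiff n (Fin.init y) g p

section
variable {E F : Type} [NormedAddCommGroup E] [NormedSpace ℝ E]
  [NormedAddCommGroup F] [NormedSpace ℝ F]

/-- Mixed differences commute with differentiation. The points entering the difference all lie
within `n r` of `p`. -/
theorem hasFDerivAt_mixedDiff (n : ℕ) (y : Fin n → E) (f : E → F) (p : E) (r : ℝ)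
    (hy : ∀ i, ‖y i‖ ≤ r) (hf : ∀ x, ‖x - p‖ ≤ n * r → DifferentiableAt ℝ f x) :
    HasFDerivAt (mixedDiff n y f) (mixedDiff n y (fderiv ℝ f) p) p := by
  induction n generalizing p with
  | zero => exact (hf p (by simp)).hasFDerivAt
  | succ n ih =>
    have hr : 0 ≤ r := (norm_nonneg _).trans (hy (Fin.last n))
    have h1 := ih (Fin.init y) (p + y (Fin.last n)) (fun i => hy _) (fun x hx => hf x (by
      have : x - p = (x - (p + y (Fin.last n))) + y (Fin.last n) := by abel
      rw [this]
      refine (norm_add_le _ _).trans ?_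
      have := hy (Fin.last n)
      push_cast
      linarith))
    have h2 := ih (Fin.init y) p (fun i => hy _) (fun x hx => hf x (by
      push_cast
      linarith))
    exact ((hasFDerivAt_comp_add_right (y (Fin.last n))).2 h1).sub h2
end

/-- For a smooth `f`, the mixed difference at `p` in small directions `y` equals `Dⁿ f (c) y` up to
an error `o(∏ ‖yᵢ‖)` as `p → c` and `y → 0`. The mean value inequality, applied in one direction
at a time, gives the product. -/
theorem mixedDiff_approx (n : ℕ) {E : Type} [NormedAddCommGroup E] [NormedSpace ℝ E] :
    ∀ {F : Type} [NormedAddCommGroup F] [NormedSpace ℝ F] {f : E → F} {c : E},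
    ContDiffAt ℝ (⊤ : ℕ∞) f c → ∀ ε > 0, ∃ r > 0, ∀ p ∈ Metric.ball c r, ∀ y : Fin n → E,
      (∀ i, ‖y i‖ ≤ r) →
      ‖mixedDiff n y f p - iteratedFDeriv ℝ n f c y‖ ≤ ε * ∏ i, ‖y i‖ := by
  induction n with
  | zero =>
    intro F _ _ f c hf ε hε
    obtain ⟨r, hr, h⟩ := Metric.continuousAt_iff.1 hf.continuousAt ε hε
    refine ⟨r, hr, fun p hp y _ => ?_⟩
    have := (h hp).le
    rw [dist_eq_norm] at this
    simpa [mixedDiff] using this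
  | succ n ih =>
    intro F _ _ f c hf ε hε
    have hg : ContDiffAt ℝ (⊤ : ℕ∞) (fderiv ℝ f) c := hf.fderiv_right (by simp)
    obtain ⟨r₀, hr₀, h₀⟩ := ih hg ε hε
    have hev : ∀ᶠ x in nhds c, DifferentiableAt ℝ f x := by
      have h1 : ContDiffAt ℝ 1 f c := hf.of_le (by exact_mod_cast le_top)
      filter_upwards [h1.eventually (by simp)] with x hx using hx.differentiableAt (by simp)
    obtain ⟨r₁, hr₁, h₁⟩ := Metric.eventually_nhds_iff.1 hev
    -- `n + 3` leaves room for `p` (within `r` of `c`), the last step `y` (at most `r`) and the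
    -- remaining `n` steps
    set r := min r₀ r₁ / (n + 3) with hr
    have hmin : 0 < min r₀ r₁ := lt_min hr₀ hr₁
    have hr0 : 0 < r := by positivity
    have hrm : (n + 3) * r = min r₀ r₁ := by rw [hr]; field_simp
    have hnr : 0 ≤ n * r := by positivity
    have hm0 : min r₀ r₁ ≤ r₀ := min_le_left _ _
    have hm1 : min r₀ r₁ ≤ r₁ := min_le_right _ _
    refine ⟨r, hr0, fun p hp y hy => ?_⟩
    have hd : ∀ x ∈ Metric.ball c (2 * r), HasFDerivWithinAt (mixedDiff n (Fin.init y) f)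
        (mixedDiff n (Fin.init y) (fderiv ℝ f) x) (Metric.ball c (2 * r)) x := by
      intro x hx
      refine (hasFDerivAt_mixedDiff n _ f x r (fun i => hy _) fun z hz => h₁ ?_).hasFDerivWithinAt
      have h2 := dist_triangle z x c
      rw [← dist_eq_norm] at hz
      rw [Metric.mem_ball] at hx
      nlinarith
    have hbd : ∀ x ∈ Metric.ball c (2 * r), ‖mixedDiff n (Fin.init y) (fderiv ℝ f) x -
        iteratedFDeriv ℝ n (fderiv ℝ f) c (Fin.init y)‖ ≤ ε * ∏ i, ‖Fin.init y i‖ := by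
      intro x hx
      rw [Metric.mem_ball] at hx
      refine h₀ x (Metric.mem_ball.2 ?_) _ fun i => (hy _).trans ?_ <;> nlinarith
    rw [Metric.mem_ball] at hp
    have hmv := (convex_ball c (2 * r)).norm_image_sub_le_of_norm_hasFDerivWithin_le' hd hbd
      (x := p) (y := p + y (Fin.last n)) (Metric.mem_ball.2 (by linarith)) (by
        rw [Metric.mem_ball]
        have h2 := dist_triangle (p + y (Fin.last n)) p c
        have h3 := hy (Fin.last n)
        rw [dist_eq_norm (p + _) p, add_sub_cancel_left] at h2
        linarith)
    rw [add_sub_cancel_left] at hmv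
    rw [iteratedFDeriv_succ_apply_right, Fin.prod_univ_castSucc, ← mul_assoc]
    exact hmv

theorem hasSum_mixedDiff (n : ℕ) (x : Fin n → ℂ) (η : ℝ) (hx : ∀ i, ‖x i‖ ≤ η)
    (A : ℂ → ℕ → ℂ) (g : ℂ → ℂ) (z u₀ : ℂ)
    (h : ∀ u, ‖u - u₀‖ ≤ n * η → HasSum (fun m => A u m * z ^ m) (g u)) :
    HasSum (fun m => mixedDiff n x (fun u => A u m) u₀ * z ^ m) (mixedDiff n x g u₀) := by
  induction n generalizing u₀ with
  | zero => exact h u₀ (by simp)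
  | succ n ih =>
    have hη : 0 ≤ η := (norm_nonneg _).trans (hx (Fin.last n))
    have h1 := ih (Fin.init x) (fun i => hx _) (u₀ + x (Fin.last n)) (fun u hu => h u (by
      have : u - u₀ = (u - (u₀ + x (Fin.last n))) + x (Fin.last n) := by ring
      rw [this]
      refine (norm_add_le _ _).trans ?_
      have := hx (Fin.last n)
      push_cast
      linarith))
    have h2 := ih (Fin.init x) (fun i => hx _) u₀ (fun u hu => h u (by push_cast; linarith))
    simpa only [mixedDiff, sub_mul] using h1.sub h2

theorem norm_mixedDiff_le (n : ℕ) (x : Fin n → ℂ) (η : ℝ) (hx : ∀ i, ‖x i‖ ≤ η)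
    (g : ℂ → ℂ) (u₀ : ℂ) (B : ℝ) (h : ∀ u, ‖u - u₀‖ ≤ n * η → ‖g u‖ ≤ B) :
    ‖mixedDiff n x g u₀‖ ≤ 2 ^ n * B := by
  induction n generalizing u₀ with
  | zero => simpa [mixedDiff] using h u₀ (by simp)
  | succ n ih =>
    have hη : 0 ≤ η := (norm_nonneg _).trans (hx (Fin.last n))
    have h1 := ih (Fin.init x) (fun i => hx _) (u₀ + x (Fin.last n)) (fun u hu => h u (by
      have : u - u₀ = (u - (u₀ + x (Fin.last n))) + x (Fin.last n) := by ring
      rw [this]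
      refine (norm_add_le _ _).trans ?_
      have := hx (Fin.last n)
      push_cast
      linarith))
    have h2 := ih (Fin.init x) (fun i => hx _) u₀ (fun u hu => h u (by push_cast; linarith))
    calc _ ≤ _ := norm_sub_le _ _
      _ ≤ 2 ^ n * B + 2 ^ n * B := add_le_add h1 h2
      _ = _ := by ring

theorem mixedDiff_comp_affine (n : ℕ) (x : Fin n → ℂ) (f : ℂ → ℂ) (c u₀ z : ℂ) :
    mixedDiff n x (fun u => f (c + u * z)) u₀ = mixedDiff n (fun i => x i * z) f (c + u₀ * z) := by
  induction n generalizing u₀ with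
  | zero => rfl
  | succ n ih =>
    simp only [mixedDiff]
    rw [ih, ih]
    have : c + (u₀ + x (Fin.last n)) * z = c + u₀ * z + x (Fin.last n) * z := by ring
    rw [this]
    rfl

/-- A series `∑ Bₘ zᵐ` evaluated along a curve `ζ t ~ α t` determines its `n`-th coefficient as soon
as its sum divided by `tⁿ` has a limit: then all lower coefficients vanish and the `n`-th one is
`l / αⁿ`. -/
theorem coeff_eq_of_tendsto {ζ : ℝ → ℂ} {α : ℂ} (hα : α ≠ 0)
    (hζ : Tendsto (fun t : ℝ => ζ t / t) (nhdsWithin 0 (Ioi 0)) (nhds α))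
    {B : ℕ → ℂ} {M R : ℝ} (hB : ∀ m, ‖B m‖ ≤ M * R ^ m) (hR : 0 < R) {q : ℝ → ℂ}
    (hq : ∀ᶠ t in nhdsWithin (0 : ℝ) (Ioi 0), HasSum (fun m => B m * ζ t ^ m) (q t))
    (n : ℕ) {l : ℂ}
    (hl : Tendsto (fun t : ℝ => q t / (t : ℂ) ^ n) (nhdsWithin 0 (Ioi 0)) (nhds l)) :
    B n * α ^ n = l := by
  have hM : 0 ≤ M := by simpa using (norm_nonneg _).trans (hB 0)
  have ht0 : Tendsto (fun t : ℝ => (t : ℂ)) (nhdsWithin 0 (Ioi 0)) (nhds 0) := by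
    have : Tendsto (fun t : ℝ => (t : ℂ)) (nhds 0) (nhds ((0 : ℝ) : ℂ)) :=
      Complex.continuous_ofReal.tendsto 0
    simpa using this.mono_left nhdsWithin_le_nhds
  have hpos : ∀ᶠ t : ℝ in nhdsWithin 0 (Ioi 0), 0 < t := eventually_mem_nhdsWithin
  set L : ℝ := ‖α‖ + 1 with hLdef
  have hL0 : 0 < L := by positivity
  have hL : ∀ᶠ t : ℝ in nhdsWithin 0 (Ioi 0), ‖ζ t / t‖ ≤ L := by
    filter_upwards [hζ.norm.eventually (gt_mem_nhds (show ‖α‖ < L by rw [hLdef]; linarith))]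
      with t ht using ht.le
  set ε : ℝ := 1 / (2 * R * L) with hε
  have hε0 : 0 < ε := by positivity
  have hsmall : ∀ᶠ t : ℝ in nhdsWithin 0 (Ioi 0), t < ε :=
    nhdsWithin_le_nhds (gt_mem_nhds hε0)
  -- If the coefficients below `m` vanish, dominated convergence isolates the `m`-th one.
  have key : ∀ m, (∀ j < m, B j = 0) →
      Tendsto (fun t : ℝ => q t / (t : ℂ) ^ m) (nhdsWithin 0 (Ioi 0)) (nhds (B m * α ^ m)) := by
    intro m hm
    have hdom : Tendsto (fun t : ℝ => ∑' j, B j * ζ t ^ j / (t : ℂ) ^ m) (nhdsWithin 0 (Ioi 0))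
        (nhds (∑' j, if j = m then B m * α ^ m else 0)) := by
      refine tendsto_tsum_of_dominated_convergence
        (bound := fun j => M * (R * L) ^ m * 2 ^ m * 2⁻¹ ^ j * 1) ?_ ?_ ?_
      · simp only [mul_one]
        exact (summable_geometric_of_lt_one (by norm_num) (by norm_num)).mul_left _
      · intro j
        rcases lt_trichotomy j m with h | h | h
        · simp only [hm j h, h.ne, if_false, zero_mul, zero_div]
          exact tendsto_const_nhds
        · subst h
          simp only [if_true]
          refine ((hζ.pow j).const_mul (B j)).congr fun t => ?_
          rw [div_pow, mul_div_assoc]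
        · simp only [h.ne', if_false]
          obtain ⟨k, rfl⟩ := Nat.exists_eq_add_of_lt h
          have := ((hζ.pow (m + k + 1)).const_mul (B (m + k + 1))).mul (ht0.pow (k + 1))
          rw [zero_pow (by omega), mul_zero] at this
          refine this.congr' ?_
          filter_upwards [hpos] with t ht
          have hts' : (t : ℂ) ≠ 0 := by exact_mod_cast ht.ne'
          have e1 : ζ t = ζ t / t * t := by field_simp
          rw [show ζ t ^ (m + k + 1) = (ζ t / t * t) ^ (m + k + 1) by rw [← e1], mul_pow,
            eq_div_iff (pow_ne_zero _ hts')]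
          ring
      · filter_upwards [hpos, hL, hsmall] with t ht hLt hts j
        rcases lt_or_ge j m with h | h
        · rw [hm j h]
          simp only [zero_mul, zero_div, norm_zero]
          positivity
        · obtain ⟨k, rfl⟩ := Nat.exists_eq_add_of_le h
          have hts' : (t : ℂ) ≠ 0 := by exact_mod_cast ht.ne'
          have e1 : B (m + k) * ζ t ^ (m + k) / (t : ℂ) ^ m =
              B (m + k) * (ζ t / t) ^ (m + k) * (t : ℂ) ^ k := by
            have e2 : ζ t = ζ t / t * t := by field_simp
            rw [show ζ t ^ (m + k) = (ζ t / t * t) ^ (m + k) by rw [← e2], mul_pow,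
              div_eq_iff (pow_ne_zero _ hts')]
            ring
          have htn : ‖(t : ℂ)‖ = t := by simp [abs_of_pos ht]
          have hRLt : R * L * t ≤ 2⁻¹ := by
            calc R * L * t ≤ R * L * ε := by gcongr
              _ = 2⁻¹ := by rw [hε]; field_simp
          rw [e1, norm_mul, norm_mul, norm_pow, norm_pow, htn]
          calc _ ≤ M * R ^ (m + k) * L ^ (m + k) * t ^ k := by
                gcongr; exact hB _
            _ = M * (R * L) ^ m * (R * L * t) ^ k := by
                rw [mul_pow (R * L) t, mul_pow R L, mul_pow R L, pow_add, pow_add]; ring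
            _ ≤ M * (R * L) ^ m * 2⁻¹ ^ k := by gcongr
            _ = M * (R * L) ^ m * 2 ^ m * 2⁻¹ ^ (m + k) * 1 := by
                rw [pow_add, inv_pow 2 m]; field_simp
    rw [tsum_ite_eq] at hdom
    refine hdom.congr' ?_
    filter_upwards [hq] with t ht
    rw [(ht.div_const _).tsum_eq]
  -- `q t / tᵐ → 0` for `m < n`, so the lower coefficients vanish one after the other
  have hzero : ∀ m, m < n → B m = 0 := by
    intro m
    induction m using Nat.strong_induction_on with
    | _ m ih =>
      intro hmn
      have h1 := key m fun j hj => ih j hj (hj.trans hmn)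
      have h2 := hl.mul (ht0.pow (n - m))
      rw [zero_pow (by omega), mul_zero] at h2
      have h3 : B m * α ^ m = 0 := by
        refine tendsto_nhds_unique (h1.congr' ?_) h2
        filter_upwards [hpos] with t ht
        have hts' : (t : ℂ) ≠ 0 := by exact_mod_cast ht.ne'
        have : (t : ℂ) ^ n = t ^ m * t ^ (n - m) := by rw [← pow_add]; congr 1; omega
        rw [this]
        field_simp
      exact (mul_eq_zero.1 h3).resolve_right (pow_ne_zero _ hα)
  exact tendsto_nhds_unique (key n hzero) hl

/-! ### Derivative estimates from expansions along a family of curves -/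

/-- The mixed difference in directions `xᵢ ζ t`, rescaled by `tⁿ`, tends to `Dⁿ f (c)` evaluated
at the vectors `xᵢ α`. -/
theorem mixedDiff_tendsto {ζ : ℝ → ℂ} {α : ℂ}
    (hζ : Tendsto (fun t : ℝ => ζ t / t) (nhdsWithin 0 (Ioi 0)) (nhds α))
    {f : ℂ → ℂ} {c : ℂ} (hf : ContDiffAt ℝ (⊤ : ℕ∞) f c) (n : ℕ) (x : Fin n → ℂ) (u₀ : ℂ) :
    Tendsto (fun t : ℝ => mixedDiff n (fun i => x i * ζ t) f (c + u₀ * ζ t) / (t : ℂ) ^ n)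
      (nhdsWithin 0 (Ioi 0)) (nhds (iteratedFDeriv ℝ n f c fun i => x i * α)) := by
  have ht0 : Tendsto (fun t : ℝ => (t : ℂ)) (nhdsWithin 0 (Ioi 0)) (nhds 0) := by
    have : Tendsto (fun t : ℝ => (t : ℂ)) (nhds 0) (nhds ((0 : ℝ) : ℂ)) :=
      Complex.continuous_ofReal.tendsto 0
    simpa using this.mono_left nhdsWithin_le_nhds
  have hpos : ∀ᶠ t : ℝ in nhdsWithin 0 (Ioi 0), 0 < t := eventually_mem_nhdsWithin
  have hζ0 : Tendsto ζ (nhdsWithin 0 (Ioi 0)) (nhds 0) := by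
    have := hζ.mul ht0
    rw [mul_zero] at this
    refine this.congr' ?_
    filter_upwards [hpos] with t ht
    have hts' : (t : ℂ) ≠ 0 := by exact_mod_cast ht.ne'
    field_simp
  have hvec : Tendsto (fun t : ℝ => fun i => x i * (ζ t / t)) (nhdsWithin 0 (Ioi 0))
      (nhds fun i => x i * α) :=
    tendsto_pi_nhds.2 fun i => hζ.const_mul (x i)
  have hD : Tendsto (fun t : ℝ => iteratedFDeriv ℝ n f c fun i => x i * (ζ t / t))
      (nhdsWithin 0 (Ioi 0)) (nhds (iteratedFDeriv ℝ n f c fun i => x i * α)) :=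
    ((iteratedFDeriv ℝ n f c).cont.tendsto _).comp hvec
  have hdiff : Tendsto (fun t : ℝ =>
      mixedDiff n (fun i => x i * ζ t) f (c + u₀ * ζ t) / (t : ℂ) ^ n -
        iteratedFDeriv ℝ n f c fun i => x i * (ζ t / t)) (nhdsWithin 0 (Ioi 0)) (nhds 0) := by
    set P : ℝ := ∏ i, ‖x i * α‖ with hP
    have hP0 : 0 ≤ P := Finset.prod_nonneg fun _ _ => norm_nonneg _
    have hprod : Tendsto (fun t : ℝ => ∏ i, ‖x i * (ζ t / t)‖) (nhdsWithin 0 (Ioi 0)) (nhds P) :=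
      tendsto_finsetProd _ fun i _ => (hζ.const_mul (x i)).norm
    rw [Metric.tendsto_nhds]
    intro ε hε
    obtain ⟨r, hr, h⟩ := mixedDiff_approx n hf (ε / (P + 1)) (by positivity)
    have hball : ∀ᶠ t : ℝ in nhdsWithin 0 (Ioi 0), c + u₀ * ζ t ∈ Metric.ball c r := by
      have : Tendsto (fun t => c + u₀ * ζ t) (nhdsWithin 0 (Ioi 0)) (nhds (c + u₀ * 0)) :=
        (hζ0.const_mul u₀).const_add c
      rw [mul_zero, add_zero] at this
      exact this.eventually (Metric.ball_mem_nhds c hr)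
    have hsmall : ∀ᶠ t : ℝ in nhdsWithin 0 (Ioi 0), ∀ i, ‖x i * ζ t‖ ≤ r := by
      rw [eventually_all]
      intro i
      have : Tendsto (fun t => ‖x i * ζ t‖) (nhdsWithin 0 (Ioi 0)) (nhds ‖x i * 0‖) :=
        (hζ0.const_mul (x i)).norm
      rw [mul_zero, norm_zero] at this
      filter_upwards [this.eventually (gt_mem_nhds hr)] with t ht using ht.le
    filter_upwards [hpos, hball, hsmall,
      hprod.eventually (gt_mem_nhds (show P < P + 1 by linarith))] with t ht h1 h2 h3
    have hts' : (t : ℂ) ≠ 0 := by exact_mod_cast ht.ne'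
    have h4 := h _ h1 _ h2
    have h5 : (fun i => x i * ζ t) = fun i => t • (x i * (ζ t / t)) := by
      funext i
      rw [Complex.real_smul]
      field_simp
    have h6 : iteratedFDeriv ℝ n f c (fun i => x i * ζ t) =
        (t : ℂ) ^ n * iteratedFDeriv ℝ n f c fun i => x i * (ζ t / t) := by
      rw [h5, ContinuousMultilinearMap.map_smul_univ]
      simp
    have htn : ‖(t : ℂ)‖ = t := by simp [abs_of_pos ht]
    have h7 : ∏ i, ‖x i * ζ t‖ = t ^ n * ∏ i, ‖x i * (ζ t / t)‖ := by
      have : ∀ i, ‖x i * ζ t‖ = t * ‖x i * (ζ t / t)‖ := by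
        intro i
        rw [congrFun h5 i, norm_smul, Real.norm_eq_abs, abs_of_pos ht]
      simp only [this, Finset.prod_mul_distrib, Finset.prod_const, Finset.card_univ,
        Fintype.card_fin]
    rw [h6, h7] at h4
    have h8 : mixedDiff n (fun i => x i * ζ t) f (c + u₀ * ζ t) / (t : ℂ) ^ n -
        (iteratedFDeriv ℝ n f c fun i => x i * (ζ t / t)) =
        (mixedDiff n (fun i => x i * ζ t) f (c + u₀ * ζ t) -
          (t : ℂ) ^ n * iteratedFDeriv ℝ n f c fun i => x i * (ζ t / t)) / (t : ℂ) ^ n := by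
      rw [sub_div, mul_div_cancel_left₀ _ (pow_ne_zero _ hts')]
    rw [dist_zero_right, h8, norm_div, norm_pow, htn, div_lt_iff₀ (by positivity)]
    calc _ ≤ _ := h4
      _ < ε / (P + 1) * (t ^ n * (P + 1)) := by gcongr
      _ = ε * t ^ n := by field_simp
  simpa using hdiff.add hD

/-- Cauchy-type estimate at `c`. If for all `u` near `u₁` the function `f` is a power series along
the curve `c + u ζ t` with coefficients `A u m` bounded by `N ^ (m + 1)`, then the mixed difference
of order `n` in `u` of the coefficient `A u n` computes `Dⁿ f (c)`. No regularity of `A` in `u` is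
needed; the constants depend only on `N` and `δ`. -/
theorem norm_iteratedFDeriv_le {ζ : ℝ → ℂ} {α : ℂ} (hα : α ≠ 0)
    (hζ : Tendsto (fun t : ℝ => ζ t / t) (nhdsWithin 0 (Ioi 0)) (nhds α))
    {f : ℂ → ℂ} {c : ℂ} (hf : ContDiffAt ℝ (⊤ : ℕ∞) f c) {u₁ : ℂ} {δ N τ : ℝ} (hδ : 0 < δ)
    (hN : 0 < N) (hτ : 0 < τ)
    (H : ∀ u ∈ Metric.ball u₁ δ, ∃ A : ℕ → ℂ, (∀ m, ‖A m‖ ≤ N ^ (m + 1)) ∧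
      ∀ t ∈ Icc 0 τ, HasSum (fun m => A m * ζ t ^ m) (f (c + u * ζ t))) (n : ℕ) :
    ‖iteratedFDeriv ℝ n f c‖ ≤
      (N * Real.exp 1) * (2 * N * Real.exp 1 / δ) ^ n * (n.factorial : ℝ) := by
  choose! A hA hs using H
  -- `n` steps of length at most `η` stay inside the ball of radius `δ`
  set η : ℝ := δ / (n + 1) with hη
  have hη0 : 0 < η := by positivity
  have hnη : n * η < δ := by
    rw [hη, mul_div_assoc', div_lt_iff₀ (by positivity)]
    nlinarith
  have hball : ∀ u, ‖u - u₁‖ ≤ n * η → u ∈ Metric.ball u₁ δ := fun u hu => by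
    rw [Metric.mem_ball, dist_eq_norm]; linarith
  -- The bound on vectors of length at most `η`, rescaled by `α`.
  have key : ∀ x : Fin n → ℂ, (∀ i, ‖x i‖ ≤ η) →
      ‖iteratedFDeriv ℝ n f c fun i => x i * α‖ ≤ 2 ^ n * N ^ (n + 1) * ‖α‖ ^ n := by
    intro x hx
    have hB : ∀ m, ‖mixedDiff n x (fun u => A u m) u₁‖ ≤ (2 ^ n * N) * N ^ m := by
      intro m
      refine (norm_mixedDiff_le n x η hx _ u₁ (N ^ (m + 1)) fun u hu => hA u (hball u hu) m).trans
        (le_of_eq (by ring))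
    have hq : ∀ᶠ t in nhdsWithin (0 : ℝ) (Ioi 0),
        HasSum (fun m => mixedDiff n x (fun u => A u m) u₁ * ζ t ^ m)
          (mixedDiff n (fun i => x i * ζ t) f (c + u₁ * ζ t)) := by
      filter_upwards [eventually_mem_nhdsWithin, nhdsWithin_le_nhds (gt_mem_nhds hτ)] with t ht ht'
      rw [← mixedDiff_comp_affine]
      exact hasSum_mixedDiff n x η hx A _ _ _ fun u hu =>
        hs u (hball u hu) t ⟨(mem_Ioi.1 ht).le, (show t < τ from ht').le⟩
    rw [← coeff_eq_of_tendsto hα hζ hB hN hq n (mixedDiff_tendsto hζ hf n x u₁), norm_mul,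
      norm_pow]
    gcongr
    exact (hB n).trans (le_of_eq (by ring))
  have hα' : 0 < ‖α‖ := norm_pos_iff.2 hα
  have hop : ‖iteratedFDeriv ℝ n f c‖ ≤ 2 ^ n * N ^ (n + 1) / η ^ n := by
    refine ContinuousMultilinearMap.opNorm_le_bound (by positivity) fun y => ?_
    -- rescale each `y i` so that `x i` has length `η`; where `y i = 0`, `x i = 0` by `0⁻¹ = 0`
    set x : Fin n → ℂ := fun i => (η * ‖α‖ / ‖y i‖ : ℝ) * y i / α with hx
    have hxη : ∀ i, ‖x i‖ ≤ η := by
      intro i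
      rcases eq_or_ne (y i) 0 with h | h
      · simp [hx, h, hη0.le]
      · have : 0 < ‖y i‖ := norm_pos_iff.2 h
        rw [hx]
        simp only [norm_div, norm_mul, Complex.norm_real, abs_norm, Real.norm_eq_abs,
          abs_of_pos hη0]
        apply le_of_eq
        field_simp
    have hy : y = fun i => (‖y i‖ / (η * ‖α‖)) • (x i * α) := by
      funext i
      rcases eq_or_ne (y i) 0 with h | h
      · simp [h]
      · have h1 : ((‖y i‖ : ℝ) : ℂ) ≠ 0 := by exact_mod_cast (norm_pos_iff.2 h).ne'
        have h2 : ((‖α‖ : ℝ) : ℂ) ≠ 0 := by exact_mod_cast hα'.ne'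
        have h3 : ((η : ℝ) : ℂ) ≠ 0 := by exact_mod_cast hη0.ne'
        rw [Complex.real_smul, hx]
        push_cast
        field_simp
    have h1 : iteratedFDeriv ℝ n f c y =
        (∏ i, ‖y i‖ / (η * ‖α‖)) • iteratedFDeriv ℝ n f c fun i => x i * α := by
      conv_lhs => rw [hy]
      rw [ContinuousMultilinearMap.map_smul_univ]
    have h2 : ∏ i, ‖y i‖ / (η * ‖α‖) = (∏ i, ‖y i‖) / (η * ‖α‖) ^ n := by
      rw [Finset.prod_div_distrib]; simp
    have h3 : 0 ≤ ∏ i, ‖y i‖ := Finset.prod_nonneg fun _ _ => norm_nonneg _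
    rw [h1, h2, norm_smul, Real.norm_of_nonneg (by positivity)]
    calc _ ≤ (∏ i, ‖y i‖) / (η * ‖α‖) ^ n * (2 ^ n * N ^ (n + 1) * ‖α‖ ^ n) := by
          gcongr; exact key x hxη
      _ = _ := by rw [mul_pow]; field_simp
  -- `(n + 1)ⁿ` comes from `η = δ / (n + 1)`
  have hexp : ((n : ℝ) + 1) ^ n ≤ Real.exp 1 ^ (n + 1) * n.factorial := by
    have := Real.pow_div_factorial_le_exp ((n : ℝ) + 1) (by positivity) n
    rw [div_le_iff₀ (by positivity)] at this
    rwa [← Real.exp_nat_mul, mul_one, Nat.cast_add, Nat.cast_one]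
  calc _ ≤ _ := hop
    _ = (2 ^ n * N ^ (n + 1) / δ ^ n) * ((n : ℝ) + 1) ^ n := by
        rw [hη, div_pow]; field_simp
    _ ≤ (2 ^ n * N ^ (n + 1) / δ ^ n) * (Real.exp 1 ^ (n + 1) * n.factorial) := by gcongr
    _ = _ := by rw [div_pow, mul_pow, mul_pow]; ring

/-! ### Uniform expansions by Baire category -/

/-- Baire category argument: pointwise convergent expansions of `f` along the curves `c + u ζ t`
have uniform coefficient bounds, and a uniform interval of validity, for `(u, c)` in some open set.
The sets of good parameters are closed because they are projections along a compact (product)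
space of coefficient sequences. -/
theorem exists_uniform_expansion {f : ℂ → ℂ} {Ω : Set ℂ} (hf : ContinuousOn f Ω) {ζ : ℝ → ℂ}
    {u₁ c₁ : ℂ} {δ₀ τ₀ L : ℝ} (hδ₀ : 0 < δ₀) (hτ₀ : 0 < τ₀)
    (hζL : ∀ t ∈ Icc 0 τ₀, ‖ζ t‖ ≤ L * t) (hLτ : L * τ₀ ≤ 1 / 2)
    (hΩ : ∀ u ∈ Metric.closedBall u₁ δ₀, ∀ c ∈ Metric.closedBall c₁ δ₀, ∀ t ∈ Icc 0 τ₀,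
      c + u * ζ t ∈ Ω)
    (hex : ∀ u ∈ Metric.closedBall u₁ δ₀, ∀ c ∈ Metric.closedBall c₁ δ₀,
      ∃ (A : ℕ → ℂ) (C R r : ℝ), 0 < r ∧ (∀ m, ‖A m‖ ≤ C * R ^ m) ∧
        ∀ t ∈ Icc 0 τ₀, ‖ζ t‖ < r → HasSum (fun m => A m * ζ t ^ m) (f (c + u * ζ t))) :
    ∃ u₂ ∈ Metric.closedBall u₁ δ₀, ∃ c₂ ∈ Metric.ball c₁ δ₀, ∃ δ > 0, ∃ N > 0, ∃ τ > 0,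
      ∀ u ∈ Metric.ball u₂ δ, ∀ c ∈ Metric.ball c₂ δ, ∃ A : ℕ → ℂ,
        (∀ m, ‖A m‖ ≤ N ^ (m + 1)) ∧
        ∀ t ∈ Icc 0 τ, HasSum (fun m => A m * ζ t ^ m) (f (c + u * ζ t)) := by
  have hL0 : 0 ≤ L := by
    have := (norm_nonneg _).trans (hζL τ₀ ⟨hτ₀.le, le_rfl⟩)
    exact nonneg_of_mul_nonneg_left this hτ₀
  have hsub : ∀ N : ℕ, ∀ t ∈ Icc 0 (τ₀ / (N + 1)), t ∈ Icc 0 τ₀ := by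
    intro N t ht
    refine ⟨ht.1, ht.2.trans (div_le_self hτ₀.le ?_)⟩
    have : (0 : ℝ) ≤ N := by positivity
    linarith
  -- the term bound that makes all the series below converge uniformly
  have hterm : ∀ (N : ℕ) (A : ℕ → ℂ), (∀ m, ‖A m‖ ≤ ((N : ℝ) + 1) ^ (m + 1)) →
      ∀ t ∈ Icc 0 (τ₀ / (N + 1)), ∀ m, ‖A m * ζ t ^ m‖ ≤ ((N : ℝ) + 1) * (1 / 2) ^ m := by
    intro N A hA t ht m
    have h1 : ((N : ℝ) + 1) * ‖ζ t‖ ≤ 1 / 2 := by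
      calc ((N : ℝ) + 1) * ‖ζ t‖ ≤ ((N : ℝ) + 1) * (L * (τ₀ / (N + 1))) := by
            gcongr; exact (hζL t (hsub N t ht)).trans (by gcongr; exact ht.2)
        _ = L * τ₀ := by field_simp
        _ ≤ 1 / 2 := hLτ
    rw [norm_mul, norm_pow]
    calc ‖A m‖ * ‖ζ t‖ ^ m ≤ ((N : ℝ) + 1) ^ (m + 1) * ‖ζ t‖ ^ m := by gcongr; exact hA m
      _ = ((N : ℝ) + 1) * (((N : ℝ) + 1) * ‖ζ t‖) ^ m := by rw [mul_pow, pow_succ]; ring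
      _ ≤ _ := by gcongr
  have hgeo : ∀ N : ℕ, Summable fun m : ℕ => ((N : ℝ) + 1) * (1 / 2 : ℝ) ^ m := fun N =>
    (summable_geometric_of_lt_one (by norm_num) (by norm_num)).mul_left _
  set D : Set (ℂ × ℂ) := Metric.closedBall u₁ δ₀ ×ˢ Metric.closedBall c₁ δ₀ with hD
  have hDc : IsCompact D := (isCompact_closedBall _ _).prod (isCompact_closedBall _ _)
  set K : ℕ → Set (ℕ → ℂ) := fun N =>
    Set.pi univ fun m => Metric.closedBall 0 (((N : ℝ) + 1) ^ (m + 1)) with hK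
  have hKc : ∀ N, IsCompact (K N) := fun N => isCompact_univ_pi fun m => isCompact_closedBall _ _
  have hKm : ∀ N A, A ∈ K N ↔ ∀ m, ‖A m‖ ≤ ((N : ℝ) + 1) ^ (m + 1) := by
    intro N A; simp [hK, Set.mem_pi]
  set Z : ℕ → Set ((ℂ × ℂ) × (ℕ → ℂ)) := fun N => {q | q ∈ D ×ˢ K N ∧
    ∀ t ∈ Icc 0 (τ₀ / (N + 1)), f (q.1.2 + q.1.1 * ζ t) = ∑' m, q.2 m * ζ t ^ m} with hZ
  have hZc : ∀ N, IsClosed (Z N) := by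
    intro N
    have hclosed : IsClosed (D ×ˢ K N) := (hDc.prod (hKc N)).isClosed
    have heq : Z N = (D ×ˢ K N) ∩ ⋂ t ∈ Icc 0 (τ₀ / (N + 1)), {q | q ∈ D ×ˢ K N ∧
        f (q.1.2 + q.1.1 * ζ t) - ∑' m, q.2 m * ζ t ^ m = 0} := by
      ext q
      simp only [hZ, Set.mem_ofPred_eq, mem_inter_iff, mem_iInter, sub_eq_zero]
      exact ⟨fun h => ⟨h.1, fun t ht => ⟨h.1, h.2 t ht⟩⟩, fun h => ⟨h.1, fun t ht => (h.2 t ht).2⟩⟩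
    rw [heq]
    refine hclosed.inter (isClosed_biInter fun t ht => ?_)
    have h1 : ContinuousOn (fun q : (ℂ × ℂ) × (ℕ → ℂ) => f (q.1.2 + q.1.1 * ζ t)) (D ×ˢ K N) := by
      refine hf.comp (by fun_prop) fun q hq => ?_
      exact hΩ _ hq.1.1 _ hq.1.2 t (hsub N t ht)
    have h2 : ContinuousOn (fun q : (ℂ × ℂ) × (ℕ → ℂ) => ∑' m, q.2 m * ζ t ^ m) (D ×ˢ K N) := by
      refine continuousOn_tsum (fun m => ?_) (hgeo N) fun m q hq =>
        hterm N q.2 ((hKm N _).1 hq.2) t ht m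
      fun_prop
    exact (h1.sub h2).preimage_isClosed_of_isClosed hclosed (isClosed_singleton (x := (0 : ℂ)))
  set E : ℕ → Set (ℂ × ℂ) := fun N => Prod.fst '' Z N with hE
  have hEc : ∀ N, IsClosed (E N) := fun N =>
    (((hDc.prod (hKc N)).of_isClosed_subset (hZc N) fun q hq => hq.1).image
      continuous_fst).isClosed
  set W : Set (ℂ × ℂ) := Metric.ball u₁ δ₀ ×ˢ Metric.ball c₁ δ₀ with hW
  have hWo : IsOpen W := Metric.isOpen_ball.prod Metric.isOpen_ball
  have hcover : ⋃ N, (E N ∪ Wᶜ) = univ := by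
    refine eq_univ_of_forall fun p => mem_iUnion.2 ?_
    by_cases hp : p ∈ W
    swap
    · exact ⟨0, Or.inr hp⟩
    have hpD : p ∈ D := ⟨Metric.ball_subset_closedBall hp.1, Metric.ball_subset_closedBall hp.2⟩
    obtain ⟨A, C, R, r, hr, hA, hs⟩ := hex p.1 hpD.1 p.2 hpD.2
    obtain ⟨N, hN⟩ := exists_nat_gt (max (max |C| |R|) (L * τ₀ / r))
    have hNC : |C| ≤ (N : ℝ) + 1 := by
      have := ((le_max_left _ _).trans (le_max_left _ _)).trans hN.le; linarith
    have hNR : |R| ≤ (N : ℝ) + 1 := by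
      have := ((le_max_right _ _).trans (le_max_left _ _)).trans hN.le; linarith
    have hNr : L * τ₀ / r < (N : ℝ) + 1 := by
      have := (le_max_right _ _).trans_lt hN; linarith
    refine ⟨N, Or.inl ⟨(p, A), ⟨⟨hpD, (hKm N A).2 fun m => ?_⟩, fun t ht => ?_⟩, rfl⟩⟩
    · calc ‖A m‖ ≤ C * R ^ m := hA m
        _ ≤ |C * R ^ m| := le_abs_self _
        _ = |C| * |R| ^ m := by rw [abs_mul, abs_pow]
        _ ≤ ((N : ℝ) + 1) * ((N : ℝ) + 1) ^ m := by gcongr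
        _ = _ := by ring
    · refine (hs t (hsub N t ht) ?_).tsum_eq.symm
      calc ‖ζ t‖ ≤ L * t := hζL t (hsub N t ht)
        _ ≤ L * (τ₀ / (N + 1)) := by gcongr; exact ht.2
        _ = L * τ₀ / (N + 1) := by ring
        _ < r := by
          rw [div_lt_iff₀ (by positivity)]
          rw [div_lt_iff₀ hr] at hNr
          linarith
  have hdense := dense_iUnion_interior_of_closed
    (fun N => (hEc N).union hWo.isClosed_compl) hcover
  obtain ⟨p, hpW, hp⟩ := hdense.inter_open_nonempty W hWo
    ⟨(u₁, c₁), Metric.mem_ball_self hδ₀, Metric.mem_ball_self hδ₀⟩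
  obtain ⟨N, hpN⟩ := mem_iUnion.1 hp
  obtain ⟨δ, hδ, hball⟩ := Metric.isOpen_iff.1 (isOpen_interior.inter hWo) p ⟨hpN, hpW⟩
  refine ⟨p.1, Metric.ball_subset_closedBall hpW.1, p.2, hpW.2, δ, hδ, (N : ℝ) + 1,
    by positivity, τ₀ / (N + 1), by positivity, fun u hu c hc => ?_⟩
  have hmem : (u, c) ∈ Metric.ball p δ := by
    rw [← ball_prod_same]; exact ⟨hu, hc⟩
  have h1 := hball hmem
  have h2 : (u, c) ∈ E N := (interior_subset h1.1).resolve_right fun h => h h1.2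
  obtain ⟨q, ⟨hq1, hq2⟩, hq3⟩ := h2
  have hA := (hKm N _).1 hq1.2
  refine ⟨q.2, hA, fun t ht => ?_⟩
  have h3 := hq2 t ht
  rw [hq3] at h3
  simp only at h3
  rw [h3]
  exact (Summable.of_norm_bounded (hgeo N) (hterm N q.2 hA t ht)).hasSum

/-! ### Complex differentiability at points of real analyticity -/

/-- Implicit function theorem: a continuous solution `φ` of `k (t, φ t) = 0`, with `k` real analytic
and `∂k / ∂s ≠ 0` at the origin, is real analytic on a right neighbourhood of `0`. -/
theorem analyticOn_of_implicit {φ : ℝ → ℝ} {b : ℝ} (hb : 0 < b)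
    (hφc : ContinuousOn φ (Icc 0 b)) (hφ0 : φ 0 = 0)
    {k : ℝ × ℝ → ℝ} (hk : AnalyticAt ℝ k (0, 0))
    (hz : ∀ᶠ t in nhdsWithin (0 : ℝ) (Ici 0), k (t, φ t) = 0) (hd : fderiv ℝ k (0, 0) (0, 1) ≠ 0) :
    ∃ l : ℝ, 0 < l ∧ AnalyticOn ℝ φ (Ico 0 l) := by
  have hinv : (fderiv ℝ k (0, 0) ∘L .inr ℝ ℝ ℝ).IsInvertible := by
    refine ⟨ContinuousLinearEquiv.unitsEquivAut ℝ (Units.mk0 _ hd), ?_⟩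
    ext
    simp
  have hcd : ContDiffAt ℝ (⊤ : WithTop ℕ∞) k (0, 0) := hk.contDiffAt
  have hne : (⊤ : WithTop ℕ∞) ≠ 0 := by simp
  have hψ := (hcd.contDiffAt_implicitFunction hne hinv).analyticAt
  set ψ := hcd.implicitFunction hne hinv with hψd
  have hev := hcd.eventually_apply_eq_iff_implicitFunction hne hinv
  have hcont : Tendsto (fun t => (t, φ t)) (nhdsWithin (0 : ℝ) (Ici 0)) (nhds (0, 0)) := by
    have h1 : Tendsto φ (nhdsWithin 0 (Ici 0)) (nhds 0) := by
      have := hφc 0 ⟨le_rfl, hb.le⟩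
      rw [ContinuousWithinAt, hφ0] at this
      refine this.mono_left ?_
      rw [← nhdsWithin_Icc_eq_nhdsGE hb]
    exact (tendsto_nhdsWithin_of_tendsto_nhds tendsto_id).prodMk_nhds h1 |>.mono_left le_rfl
  have h0 : k (0, 0) = 0 := by
    have := hz.self_of_nhdsWithin (by simp)
    rwa [hφ0] at this
  have heq : ∀ᶠ t in nhdsWithin (0 : ℝ) (Ici 0), φ t = ψ t := by
    filter_upwards [hcont.eventually hev, hz] with t h1 h2
    exact (h1.1 (by rw [h2, h0])).symm
  have han : ∀ᶠ t in nhds (0 : ℝ), AnalyticAt ℝ ψ t := hψ.eventually_analyticAt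
  have := (heq.and (nhdsWithin_le_nhds han))
  obtain ⟨l, hl, hsub⟩ := (mem_nhdsGE_iff_exists_Ico_subset).1 this
  refine ⟨l, hl, fun t ht => ?_⟩
  refine (hsub ht).2.analyticWithinAt.congr (fun s hs => (hsub hs).1) (hsub ht).1

/-- If `f` is real analytic at `c` and agrees with a holomorphic `F` on the curve
`c + u (t + i φ t)`, then `D (f - F)` vanishes at `c`: it kills the tangent vector of the curve,
and if it were nonzero, the equation `f - F = 0` would make `φ` analytic. -/
theorem differentiableAt_of_analyticAt {φ : ℝ → ℝ} {b d : ℝ} (hb : 0 < b)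
    (hφc : ContinuousOn φ (Icc 0 b)) (hφ0 : φ 0 = 0)
    (hφd : HasDerivWithinAt φ d (Ici 0) 0)
    (hna : ¬ ∃ l : ℝ, 0 < l ∧ AnalyticOn ℝ φ (Ico 0 l))
    {f F : ℂ → ℂ} {c u : ℂ} (hu : u ≠ 0) (hf : AnalyticAt ℝ f c) (hF : AnalyticAt ℂ F c)
    (hfF : ∀ᶠ t : ℝ in nhdsWithin 0 (Ici 0),
      f (c + u * (t + I * φ t)) = F (c + u * (t + I * φ t))) :
    DifferentiableAt ℂ f c := by
  -- linear coordinates in which the curve becomes the graph of `φ`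
  set T : ℝ × ℝ →L[ℝ] ℂ := (ContinuousLinearMap.mul ℝ ℂ u).comp
    (ofRealCLM.comp (.fst ℝ ℝ ℝ) + I • ofRealCLM.comp (.snd ℝ ℝ ℝ)) with hT
  have hTa : ∀ v, T v = u * (v.1 + I * v.2) := by
    intro v; simp [hT, mul_add]
  have hG : AnalyticAt ℝ (fun z => f z - F z) c := hf.sub hF.restrictScalars
  set D := fderiv ℝ (fun z => f z - F z) c with hDdef
  set K : ℝ × ℝ → ℂ := fun v => f (c + T v) - F (c + T v) with hK
  have hin : AnalyticAt ℝ (fun v : ℝ × ℝ => c + T v) (0, 0) :=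
    analyticAt_const.add (T.analyticAt _)
  have hin0 : c + T (0, 0) = c := by simp [hTa]
  have hKa : AnalyticAt ℝ K (0, 0) :=
    AnalyticAt.fun_comp (g := fun z => f z - F z) (by rw [hin0]; exact hG) hin
  have hKd : HasFDerivAt K (D.comp T) (0, 0) := by
    have h1 : HasFDerivAt (fun v : ℝ × ℝ => c + T v) T (0, 0) := T.hasFDerivAt.const_add c
    have h2 : HasFDerivAt (fun z => f z - F z) D (c + T (0, 0)) := by
      rw [hin0]; exact hG.differentiableAt.hasFDerivAt
    exact h2.comp (0, 0) h1
  have hKz : ∀ᶠ t in nhdsWithin (0 : ℝ) (Ici 0), K (t, φ t) = 0 := by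
    filter_upwards [hfF] with t ht
    simp only [hK, hTa, ht, sub_self]
  -- the right derivative of `K` along the graph of `φ` vanishes
  have h1d : D (T (1, d)) = 0 := by
    have h1 : HasDerivWithinAt (fun t => (t, φ t)) ((1 : ℝ), d) (Ici 0) 0 :=
      (hasDerivWithinAt_id _ _).prodMk hφd
    have h2 : HasDerivWithinAt (fun t => K (t, φ t)) (D.comp T (1, d)) (Ici 0) 0 :=
      HasFDerivAt.comp_hasDerivWithinAt (f := fun t => (t, φ t)) 0 (by rw [hφ0]; exact hKd) h1
    have h3 : HasDerivWithinAt (fun t => K (t, φ t)) 0 (Ici 0) 0 :=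
      (hasDerivWithinAt_const (0 : ℝ) (Ici (0 : ℝ)) (0 : ℂ)).congr_of_eventuallyEq hKz
        (hKz.self_of_nhdsWithin (by simp))
    exact (uniqueDiffWithinAt_Ici (0 : ℝ)).eq_deriv _ h2 h3
  -- a real linear functional nonzero on `∂K / ∂s` would let the implicit function theorem apply
  have hcoord : ∀ ℓ : ℂ →L[ℝ] ℝ, ℓ (D (T (0, 1))) = 0 := by
    intro ℓ
    by_contra hne
    refine hna (analyticOn_of_implicit hb hφc hφ0 (k := fun v => ℓ (K v)) ?_ ?_ ?_)
    · exact (ℓ.analyticAt _).comp hKa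
    · filter_upwards [hKz] with t ht
      rw [ht, map_zero]
    · have : HasFDerivAt (fun v => ℓ (K v)) (ℓ.comp (D.comp T)) (0, 0) :=
        ℓ.hasFDerivAt.comp (0, 0) hKd
      rw [this.fderiv]
      exact hne
  have h01 : D (T (0, 1)) = 0 := Complex.ext (hcoord reCLM) (hcoord imCLM)
  have h10 : D (T (1, 0)) = 0 := by
    have : T (1, d) = T (1, 0) + d • T (0, 1) := by
      rw [← map_smul, ← map_add]; simp
    rw [this, map_add, map_smul, h01, smul_zero, add_zero] at h1d
    exact h1d
  have hD0 : D = 0 := by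
    ext z
    have hz : z = T ((z / u).re, (z / u).im) := by
      rw [hTa, mul_comm I, Complex.re_add_im, mul_div_cancel₀ _ hu]
    have hz2 : ((z / u).re, (z / u).im) =
        (z / u).re • ((1 : ℝ), (0 : ℝ)) + (z / u).im • ((0 : ℝ), (1 : ℝ)) := by simp
    rw [hz, hz2, map_add, map_add, map_smul, map_smul, map_smul, map_smul, h10, h01]
    simp
  have hFd : HasFDerivAt F ((fderiv ℂ F c).restrictScalars ℝ) c :=
    hF.differentiableAt.hasFDerivAt.restrictScalars ℝ
  have hsum : HasFDerivAt f ((fderiv ℂ F c).restrictScalars ℝ) c := by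
    have := hG.differentiableAt.hasFDerivAt.add hFd
    rw [← hDdef, hD0, zero_add] at this
    exact this.congr_of_eventuallyEq (Eventually.of_forall fun z => by simp)
  exact (hasFDerivAt_of_restrictScalars ℝ hsum rfl).differentiableAt

/-! ### Density of the points of complex differentiability -/

/-- Only the terms of order at most one of the Taylor series matter. The little-o at `t = 0` itself
(with `|0| ^ 0 = 1`) gives `h 0 = φ 0 = 0`; taking real parts takes care of a complex `h 1`. -/
theorem hasDerivWithinAt_of_taylor {φ : ℝ → ℝ} (hφ0 : φ 0 = 0) {h : ℕ → ℂ}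
    (hT : HasTaylorSeries1At φ h) : HasDerivWithinAt φ (h 1).re (Ici 0) 0 := by
  have h1 := hT 1
  have h0 : h 0 = 0 := by
    have h2 := (isLittleO_iff.1 (hT 0) one_pos).self_of_nhdsWithin (by simp : (0 : ℝ) ∈ Ici 0)
    have h3 : ∀ ε > 0, ‖h 0‖ ≤ ε := fun ε hε => by
      simpa [hφ0] using
        (isLittleO_iff.1 (hT 0) hε).self_of_nhdsWithin (by simp : (0 : ℝ) ∈ Ici 0)
    exact norm_le_zero_iff.1 (le_of_forall_pos_le_add fun ε hε => by simpa using h3 ε hε)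
  rw [hasDerivWithinAt_iff_isLittleO]
  refine IsLittleO.trans_isBigO (IsBigO.trans_isLittleO ?_ h1) ?_
  · refine IsBigO.of_bound 1 (Eventually.of_forall fun t => ?_)
    have : φ t - φ 0 - (t - 0) • (h 1).re =
        ((φ t : ℂ) - ∑ j ∈ Finset.range (1 + 1), h j * (t : ℂ) ^ j).re := by
      simp [Finset.sum_range_succ, h0, hφ0, mul_comm]
    rw [this, one_mul]
    exact Complex.abs_re_le_norm _
  · refine IsBigO.of_bound 1 (Eventually.of_forall fun t => ?_)
    simp

theorem exists_coeff_of_analyticAt {F : ℂ → ℂ} {c u : ℂ} (hF : AnalyticAt ℂ F c) :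
    ∃ (A : ℕ → ℂ) (C R r : ℝ), 0 < r ∧ (∀ m, ‖A m‖ ≤ C * R ^ m) ∧
      ∀ z, ‖z‖ < r → HasSum (fun m => A m * z ^ m) (F (c + u * z)) := by
  have hG : AnalyticAt ℂ (fun z => F (c + u * z)) 0 :=
    AnalyticAt.fun_comp (g := F) (by simpa using hF) (by fun_prop)
  obtain ⟨p, hp⟩ := hG
  obtain ⟨r, hr⟩ := hp
  obtain ⟨C, R, _, _, hCR⟩ := p.le_mul_pow_of_radius_pos (hr.r_pos.trans_le hr.r_le)
  obtain ⟨r', hr'0, hr'⟩ := ENNReal.lt_iff_exists_nnreal_btwn.1 hr.r_pos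
  refine ⟨p.coeff, C, R, r', by exact_mod_cast hr'0, fun m => ?_, fun z hz => ?_⟩
  · rw [← FormalMultilinearSeries.norm_apply_eq_norm_coef]; exact hCR m
  · have hz' : z ∈ Metric.eball (0 : ℂ) r := by
      refine Metric.eball_subset_eball hr'.le ?_
      rw [Metric.eball_coe, Metric.mem_ball, dist_zero_right]
      exact hz
    have := hr.hasSum hz'
    simpa [FormalMultilinearSeries.apply_eq_pow_smul_coeff, mul_comm, zero_add] using this

/-- Any nonempty open set `W` on which the hypotheses hold contains a point of complex
differentiability. The extension `F` is only used near the base point `c` of the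
curve. -/
theorem exists_differentiableAt {b : ℝ} (hb : 0 < b) {φ : ℝ → ℝ} {d : ℝ}
    (hφc : ContinuousOn φ (Icc 0 b)) (hφ0 : φ 0 = 0)
    (hφd : HasDerivWithinAt φ d (Ici 0) 0)
    (hna : ¬ ∃ l : ℝ, 0 < l ∧ AnalyticOn ℝ φ (Ico 0 l))
    {U : Set ℂ} (hU : IsOpen U) (hUne : U.Nonempty) (hU0 : ∀ u ∈ U, u ≠ 0)
    {W : Set ℂ} (hW : IsOpen W) (hWne : W.Nonempty) {f : ℂ → ℂ}
    (hf : ContDiffOn ℝ (⊤ : ℕ∞) f W)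
    (hhol : ∀ u ∈ U, ∀ c ∈ W, ∃ F : ℂ → ℂ, AnalyticAt ℂ F c ∧ ∀ t ∈ Icc 0 b,
      c + u * (t + I * φ t) ∈ W → f (c + u * (t + I * φ t)) = F (c + u * (t + I * φ t))) :
    ∃ c ∈ W, DifferentiableAt ℂ f c := by
  obtain ⟨u₁, hu₁⟩ := hUne
  obtain ⟨c₁, hc₁⟩ := hWne
  set ζ : ℝ → ℂ := fun t => t + I * φ t with hζdef
  set α : ℂ := 1 + I * d with hαdef
  have hα : α ≠ 0 := fun h => by simpa [hαdef] using congrArg Complex.re h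
  have hζ0 : ζ 0 = 0 := by simp [hζdef, hφ0]
  have hζd : HasDerivWithinAt ζ α (Ici 0) 0 := by
    have h1 : HasDerivWithinAt (fun t : ℝ => (t : ℂ)) 1 (Ici 0) 0 :=
      (Complex.ofRealCLM.hasDerivAt (x := (0 : ℝ))).hasDerivWithinAt
    have h2 : HasDerivWithinAt (fun t : ℝ => (φ t : ℂ)) d (Ici 0) 0 := hφd.ofReal_comp
    exact h1.add (h2.const_mul I)
  have hζ : Tendsto (fun t : ℝ => ζ t / t) (nhdsWithin 0 (Ioi 0)) (nhds α) := by
    have := hasDerivWithinAt_iff_tendsto_slope.1 hζd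
    rw [Ici_sdiff_left] at this
    refine this.congr fun t => ?_
    rw [slope_def_module, hζ0, sub_zero, sub_zero, Complex.real_smul, div_eq_inv_mul]
    simp
  -- `‖ζ t‖ ≤ L t` near `0`
  set L : ℝ := ‖α‖ + 1 with hL
  have hL0 : 0 < L := by positivity
  have hζL : ∀ᶠ t in nhdsWithin (0 : ℝ) (Ioi 0), ‖ζ t‖ ≤ L * t := by
    filter_upwards [hζ.norm.eventually (gt_mem_nhds (show ‖α‖ < L by rw [hL]; linarith)),
      eventually_mem_nhdsWithin] with t ht ht0
    have ht0' : 0 < t := ht0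
    rw [norm_div, Complex.norm_real, Real.norm_of_nonneg ht0'.le, div_lt_iff₀ ht0'] at ht
    exact ht.le
  obtain ⟨τ₁, hτ₁, hτ₁'⟩ := mem_nhdsGT_iff_exists_Ioc_subset.1 hζL
  obtain ⟨δ₁, hδ₁, hδU⟩ := Metric.nhds_basis_closedBall.mem_iff.1 (hU.mem_nhds hu₁)
  obtain ⟨δ₂, hδ₂, hδW⟩ := Metric.nhds_basis_closedBall.mem_iff.1 (hW.mem_nhds hc₁)
  -- radii chosen so that `u` stays in `U` and the curves `c + u ζ t`, `t ≤ τ₀`, stay in `W`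
  set δ₀ : ℝ := min δ₁ (δ₂ / 2) with hδ₀def
  have hδ₀ : 0 < δ₀ := by positivity
  have hδ₀1 : δ₀ ≤ δ₁ := min_le_left _ _
  have hδ₀2 : δ₀ ≤ δ₂ / 2 := min_le_right _ _
  set V : ℝ := ‖u₁‖ + δ₀ with hV
  have hV0 : 0 < V := by positivity
  set τ₀ : ℝ := min (min τ₁ b) (min (1 / (2 * L)) (δ₂ / (2 * V * L))) with hτ₀def
  have hτ₁0 : 0 < τ₁ := hτ₁
  have hτ₀ : 0 < τ₀ := by positivity
  have hτ₀1 : τ₀ ≤ τ₁ := (min_le_left _ _).trans (min_le_left _ _)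
  have hτ₀b : τ₀ ≤ b := (min_le_left _ _).trans (min_le_right _ _)
  have hLτ : L * τ₀ ≤ 1 / 2 := by
    calc L * τ₀ ≤ L * (1 / (2 * L)) := by
          gcongr; exact (min_le_right _ _).trans (min_le_left _ _)
      _ = 1 / 2 := by field_simp
  have hVτ : V * (L * τ₀) ≤ δ₂ / 2 := by
    calc V * (L * τ₀) ≤ V * (L * (δ₂ / (2 * V * L))) := by
          gcongr; exact (min_le_right _ _).trans (min_le_right _ _)
      _ = δ₂ / 2 := by field_simp
  have hζL' : ∀ t ∈ Icc 0 τ₀, ‖ζ t‖ ≤ L * t := by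
    intro t ht
    rcases ht.1.eq_or_lt with h | h
    · simp [← h, hζ0]
    · exact hτ₁' ⟨h, ht.2.trans hτ₀1⟩
  have hmem : ∀ u ∈ Metric.closedBall u₁ δ₀, ∀ c ∈ Metric.closedBall c₁ δ₀, ∀ t ∈ Icc 0 τ₀,
      c + u * ζ t ∈ W := by
    intro u hu c hc t ht
    apply hδW
    have h1 : ‖u‖ ≤ V := by
      have := norm_le_norm_add_norm_sub u₁ u
      rw [mem_closedBall_iff_norm'] at hu
      linarith
    have h2 : ‖u * ζ t‖ ≤ δ₂ / 2 := by
      rw [norm_mul]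
      refine le_trans ?_ hVτ
      gcongr
      exact (hζL' t ht).trans (by gcongr; exact ht.2)
    rw [mem_closedBall_iff_norm] at hc ⊢
    calc ‖c + u * ζ t - c₁‖ = ‖(c - c₁) + u * ζ t‖ := by congr 1; ring
      _ ≤ ‖c - c₁‖ + ‖u * ζ t‖ := norm_add_le _ _
      _ ≤ δ₂ := by linarith
  have hUs : ∀ u ∈ Metric.closedBall u₁ δ₀, u ∈ U := fun u hu =>
    hδU (Metric.closedBall_subset_closedBall hδ₀1 hu)
  have hWs : ∀ c ∈ Metric.closedBall c₁ δ₀, c ∈ W := fun c hc =>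
    hδW (Metric.closedBall_subset_closedBall (by linarith) hc)
  obtain ⟨u₂, hu₂, c₂, hc₂, δ, hδ, N, hN, τ, hτ, H⟩ :=
    exists_uniform_expansion hf.continuousOn hδ₀ hτ₀ hζL' hLτ hmem (by
      intro u hu c hc
      obtain ⟨F, hF, hfF⟩ := hhol u (hUs u hu) c (hWs c hc)
      obtain ⟨A, C, R, r, hr, hA, hs⟩ := exists_coeff_of_analyticAt (u := u) hF
      refine ⟨A, C, R, r, hr, hA, fun t ht htr => ?_⟩
      rw [hfF t ⟨ht.1, ht.2.trans hτ₀b⟩ (hmem u hu c hc t ht)]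
      exact hs _ htr)
  have hc₂W : c₂ ∈ W := hWs _ (Metric.ball_subset_closedBall hc₂)
  obtain ⟨ρ, hρ, hρW⟩ := Metric.isOpen_iff.1 hW c₂ hc₂W
  have han : AnalyticAt ℝ f c₂ := by
    refine analyticAt_of_iteratedFDeriv_bound (ρ := min ρ δ) (C := N * Real.exp 1)
      (K := 2 * N * Real.exp 1 / δ) (lt_min hρ hδ) (by positivity)
      (hf.mono ((Metric.ball_subset_ball (min_le_left _ _)).trans hρW)) fun n x hx => ?_
    have hx1 : x ∈ W := hρW (Metric.ball_subset_ball (min_le_left _ _) hx)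
    exact norm_iteratedFDeriv_le hα hζ (hf.contDiffAt (hW.mem_nhds hx1)) hδ hN hτ
      (fun u hu => H u hu x (Metric.ball_subset_ball (min_le_right _ _) hx)) n
  obtain ⟨F, hF, hfF⟩ := hhol u₂ (hUs u₂ hu₂) c₂ hc₂W
  refine ⟨c₂, hc₂W, differentiableAt_of_analyticAt hb hφc hφ0 hφd hna (hU0 _ (hUs u₂ hu₂)) han
    hF ?_⟩
  filter_upwards [Icc_mem_nhdsGE hτ₀] with t ht
  exact hfF t ⟨ht.1, ht.2.trans hτ₀b⟩ (hmem u₂ hu₂ c₂ (Metric.ball_subset_closedBall hc₂) t ht)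

end Hartogs

theorem stmt11 (b : ℝ) (hb : 0 < b) (φ : ℝ → ℝ)
    (hφc : ContinuousOn φ (Set.Icc 0 b)) (hφ0 : φ 0 = 0)
    (hφT : ∃ h : ℕ → ℂ, HasTaylorSeries1At φ h)
    (hna : ¬ ∃ l : ℝ, 0 < l ∧ AnalyticOn ℝ φ (Set.Ico 0 l))
    (S : Set ℂ) (hS : S = {w : ℂ | ∃ t : ℝ, 0 ≤ t ∧ t ≤ b ∧ w = ↑t + Complex.I * ↑(φ t)})
    (U : Set ℂ) (hU : IsOpen U) (hUne : U.Nonempty) (hU0 : ∀ u ∈ U, u ≠ 0)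
    (Ω : Set ℂ) (hΩ : IsOpen Ω) (hΩc : IsConnected Ω)
    (f : ℂ → ℂ) (hf : ContDiffOn ℝ (⊤ : ℕ∞) f Ω)
    (hhol : ∀ u ∈ U, ∀ c : ℂ,
      ExtendsHolomorphicallyOn f ((fun z => u * z + c) '' S ∩ Ω)) :
    DifferentiableOn ℂ f Ω := by
  obtain ⟨h, hT⟩ := hφT
  have hφd := Hartogs.hasDerivWithinAt_of_taylor hφ0 hT
  have hmemS : ∀ u c : ℂ, ∀ t ∈ Icc 0 b,
      c + u * (t + I * φ t) ∈ (fun z => u * z + c) '' S := by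
    intro u c t ht
    rw [hS]
    exact ⟨_, ⟨t, ht.1, ht.2, rfl⟩, add_comm _ _⟩
  have hext : ∀ u ∈ U, ∀ c ∈ Ω, ∃ F : ℂ → ℂ, AnalyticAt ℂ F c ∧ ∀ t ∈ Icc 0 b,
      c + u * (t + I * φ t) ∈ Ω → f (c + u * (t + I * φ t)) = F (c + u * (t + I * φ t)) := by
    intro u hu c hc
    obtain ⟨V, F, hV, hsub, hF, hfF⟩ := hhol u hu c
    refine ⟨F, ?_, fun t ht hW => hfF ⟨hmemS u c t ht, hW⟩⟩
    have h0 : c ∈ (fun z => u * z + c) '' S := by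
      simpa [hφ0] using hmemS u c 0 ⟨le_rfl, hb.le⟩
    exact hF.analyticAt (hV.mem_nhds (hsub ⟨h0, hc⟩))
  have hd : ∀ x ∈ Ω, DifferentiableAt ℝ f x := fun x hx =>
    (hf.contDiffAt (hΩ.mem_nhds hx)).differentiableAt (by simp)
  have hcont : ContinuousOn (fun x => fderiv ℝ f x I - I • fderiv ℝ f x 1) Ω := by
    have h1 : ContinuousOn (fderiv ℝ f) Ω :=
      hf.continuousOn_fderiv_of_isOpen hΩ (by exact_mod_cast le_top)
    fun_prop
  intro x hx
  refine (differentiableAt_complex_iff_differentiableAt_real.2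
    ⟨hd x hx, sub_eq_zero.1 ?_⟩).differentiableWithinAt
  by_contra hne
  have hopen := hcont.isOpen_inter_preimage hΩ (isOpen_compl_singleton (x := (0 : ℂ)))
  -- the Cauchy–Riemann equation fails on an open set, which is nonempty by assumption
  obtain ⟨c, hcW, hc⟩ := Hartogs.exists_differentiableAt hb hφc hφ0 hφd hna hU hUne hU0 hopen
    ⟨x, hx, hne⟩ (hf.mono inter_subset_left) (by
      intro u hu c hc
      obtain ⟨F, hF, hfF⟩ := hext u hu c hc.1
      exact ⟨F, hF, fun t ht hW => hfF t ht hW.1⟩)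
  exact hcW.2 (sub_eq_zero.2 (differentiableAt_complex_iff_differentiableAt_real.1 hc).2)
end
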